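/- For every t > 0 and every a > 0, the function u ↦ E[ (A_t − u)^+ ] is twice differentiable at a and its second derivative at a equals (2/a²)·e^{-2/a} · E[ exp( 2·exp(B_t − t/2) / (a + A_t) ) ] − (1/2)·e^{-2/a} · E[ M_t · (a/2 + A_t/2)^{-2} · exp( M_t / (a/2 + A_t/2) ) ]. -/

import Mathlib

/-!
The function `e(ζ) = exp (-2 / ζ)`, extended by `0` to `ζ ≤ 0`, is harmonic for the diffusion
`V = (u - A) / M`, and Doob's `e`-transform of `V` is the diffusion `W = (u + A) / M`: their
generators satisfy `L_V (e f) = e L_W f`. Hence `E[e(V_t) f(V_t)] = e(u) E[f(W_t)]`. Taking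
`f = e ^ n` for all `n`, the moment problem on `[0, 1]` allows `n = -1` as well, so that
`P(A_t < u) = exp (-2 / u) E[exp (2 M_t / (u + A_t))]`. The right-hand side is smooth in `u > 0`,
so `A_t` has no atoms, `u ↦ E[(A_t - u)⁺]` has derivative `P(A_t < u) - 1`, and the second
derivative follows by differentiating the product under the expectation.

No stochastic calculus is needed for the transform: both diffusions are limits of Euler schemes, and
the two one-step kernels are intertwined by `e` up to an error of order `h ^ (3 / 2)`, which is
negligible over `t / h` steps. This holds uniformly up to the boundary `ζ = 0` because Cauchy's
estimates bound the derivatives of `e f` there in terms of `e` and the supremum of `f` alone.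
-/

open MeasureTheory ProbabilityTheory Real Set

noncomputable section

/-- A standard one-dimensional Brownian motion `B` (with `B 0 = 0`, continuous
paths, Gaussian increments and independent increments) on a probability space
with measure `P`. -/
structure IsBrownianMotion {Ω : Type*} [MeasurableSpace Ω]
    (P : Measure Ω) (B : ℝ → Ω → ℝ) : Prop where
  isProbabilityMeasure : IsProbabilityMeasure P
  measurable : ∀ t : ℝ, Measurable (B t)
  start : ∀ ω, B 0 ω = 0
  continuous_paths : ∀ ω, Continuous fun t => B t ω
  gaussian_increments : ∀ s t : ℝ, 0 ≤ s → s ≤ t →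
    P.map (fun ω => B t ω - B s ω) = gaussianReal 0 (Real.toNNReal (t - s))
  indep_increments : ∀ t : ℕ → ℝ, Monotone t → 0 ≤ t 0 →
    iIndepFun
      (fun (i : ℕ) (ω : Ω) => B (t (i + 1)) ω - B (t i) ω) P

/-- The exponential martingale `M_t = exp (B_t - t/2)`. -/
def M {Ω : Type*} (B : ℝ → Ω → ℝ) (t : ℝ) (ω : Ω) : ℝ :=
  Real.exp (B t ω - t / 2)

/-- The time integral `A_t = ∫_0^t exp (B_s - s/2) ds`. -/
def A {Ω : Type*} (B : ℝ → Ω → ℝ) (t : ℝ) (ω : Ω) : ℝ :=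
  ∫ s in (0 : ℝ)..t, Real.exp (B s ω - s / 2)

/-- The time integral with drift `ν`: `A_t^{(ν)} = ∫_0^t exp (B_s + (ν - 1/2) s) ds`. -/
def Adrift {Ω : Type*} (B : ℝ → Ω → ℝ) (ν t : ℝ) (ω : Ω) : ℝ :=
  ∫ s in (0 : ℝ)..t, Real.exp (B s ω + (ν - 1 / 2) * s)

variable {Ω : Type*} [MeasurableSpace Ω] (P : MeasureTheory.Measure Ω) (B : ℝ → Ω → ℝ)

section Calculus

theorem hasDerivAt_taylor_sum {𝕜 E : Type*} [RCLike 𝕜] [NormedAddCommGroup E] [NormedSpace 𝕜 E]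
    (a : ℕ → E) (n : ℕ) (c w : 𝕜) :
    HasDerivAt (fun v => ∑ k ∈ Finset.range (n + 1), ((v - c) ^ k / (k.factorial : 𝕜)) • a k)
      (∑ k ∈ Finset.range n, ((w - c) ^ k / (k.factorial : 𝕜)) • a (k + 1)) w := by
  have hterm (k : ℕ) : HasDerivAt (fun v => (v - c) ^ (k + 1) / ((k + 1).factorial : 𝕜))
      ((w - c) ^ k / (k.factorial : 𝕜)) w := by
    refine ((((hasDerivAt_id' w).sub_const c).pow (k + 1)).div_const _).congr_deriv ?_
    have := Nat.cast_ne_zero (R := 𝕜).2 k.factorial_ne_zero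
    rw [Nat.factorial_succ]
    push_cast
    field_simp
  simp only [Finset.sum_range_succ' _ n, pow_zero]
  exact (HasDerivAt.fun_sum fun k _ => (hterm k).smul_const (a (k + 1))).add_const _

theorem norm_sub_taylor_sum_le {𝕜 E : Type*} [RCLike 𝕜] [NormedAddCommGroup E] [NormedSpace 𝕜 E]
    [CompleteSpace E] {f : 𝕜 → E} {s : Set 𝕜} (hs : Convex ℝ s) {C : ℝ} {c z : 𝕜} (n : ℕ)
    (hf : AnalyticOnNhd 𝕜 f s) (hC : ∀ w ∈ s, ‖iteratedDeriv n f w‖ ≤ C)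
    (hc : c ∈ s) (hz : z ∈ s) :
    ‖f z - ∑ k ∈ Finset.range n, ((z - c) ^ k / (k.factorial : 𝕜)) • iteratedDeriv k f c‖ ≤
      C * ‖z - c‖ ^ n := by
  induction n generalizing f z with
  | zero => simpa using hC z hz
  | succ n ih =>
    have hC0 : 0 ≤ C := (norm_nonneg _).trans (hC c hc)
    have hderiv (w) (hw : w ∈ s) : HasDerivAt
        (fun v => f v - ∑ k ∈ Finset.range (n + 1),
          ((v - c) ^ k / (k.factorial : 𝕜)) • iteratedDeriv k f c)
        (deriv f w - ∑ k ∈ Finset.range n,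
          ((w - c) ^ k / (k.factorial : 𝕜)) • iteratedDeriv k (deriv f) c) w := by
      simpa only [iteratedDeriv_succ'] using (hf w hw).differentiableAt.hasDerivAt.fun_sub
        (hasDerivAt_taylor_sum (fun k => iteratedDeriv k f c) n c w)
    have hbound (w) (hw : w ∈ segment ℝ c z) :
        ‖deriv f w - ∑ k ∈ Finset.range n,
          ((w - c) ^ k / (k.factorial : 𝕜)) • iteratedDeriv k (deriv f) c‖ ≤ C * ‖z - c‖ ^ n := by
      refine (ih hf.deriv (fun v hv => by rw [← iteratedDeriv_succ']; exact hC v hv)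
        (hs.segment_subset hc hz hw)).trans ?_
      gcongr
      exact norm_sub_le_of_mem_segment hw
    have hmvt := (convex_segment c z).norm_image_sub_le_of_norm_hasDerivWithin_le
      (fun w hw => (hderiv w (hs.segment_subset hc hz hw)).hasDerivWithinAt) hbound
      (left_mem_segment ℝ c z) (right_mem_segment ℝ c z)
    simpa [Finset.sum_range_succ', pow_succ, mul_assoc] using hmvt

theorem norm_iteratedDeriv_le_of_forall_mem_closedBall {f : ℂ → ℂ} {U : Set ℂ}
    (hf : DifferentiableOn ℂ f U) {c : ℂ} {R C : ℝ} (hR : 0 < R)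
    (hU : Metric.closedBall c R ⊆ U) (hC : ∀ z ∈ Metric.closedBall c R, ‖f z‖ ≤ C) (n : ℕ) :
    ‖iteratedDeriv n f c‖ ≤ n.factorial * C / R ^ n :=
  Complex.norm_iteratedDeriv_le_of_forall_mem_sphere_norm_le n hR
    ((hf.mono hU).diffContOnCl_ball subset_rfl)
    fun z hz => hC z (Metric.sphere_subset_closedBall hz)

theorem aestronglyMeasurable_deriv_of_forall_mem {α : Type*} [MeasurableSpace α] {μ : Measure α}
    {F : ℂ → α → ℂ} {U : Set ℂ} (hU : IsOpen U)
    (hmeas : ∀ ζ ∈ U, AEStronglyMeasurable (F ζ) μ)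
    (hdiff : ∀ a, DifferentiableOn ℂ (fun ζ => F ζ a) U) {z : ℂ} (hz : z ∈ U) :
    AEStronglyMeasurable (fun a => deriv (fun ζ => F ζ a) z) μ := by
  obtain ⟨ε, hε, hεU⟩ := Metric.isOpen_iff.1 hU z hz
  obtain ⟨u, -, hu, hu0⟩ := exists_seq_strictAnti_tendsto' hε
  have hpt (n : ℕ) : z + (u n : ℂ) ∈ U := hεU (by simpa [abs_of_pos (hu n).1] using (hu n).2)
  have hulim : Filter.Tendsto (fun n => (u n : ℂ)) Filter.atTop (nhdsWithin 0 {0}ᶜ) :=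
    tendsto_nhdsWithin_iff.2 ⟨by exact_mod_cast (Complex.continuous_ofReal.tendsto 0).comp hu0,
      Filter.Eventually.of_forall fun n => by simpa using (hu n).1.ne'⟩
  refine aestronglyMeasurable_of_tendsto_ae Filter.atTop
    (f := fun n a => (u n : ℂ)⁻¹ • (F (z + u n) a - F z a))
    (fun n => ((hmeas _ (hpt n)).fun_sub (hmeas z hz)).fun_const_smul _)
    (Filter.Eventually.of_forall fun a => ?_)
  exact (hasDerivAt_iff_tendsto_slope_zero.1
    ((hdiff a).differentiableAt (hU.mem_nhds hz)).hasDerivAt).comp hulim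

theorem hasDerivAt_integral_of_norm_le {α : Type*} [MeasurableSpace α] {μ : Measure α}
    {F : ℂ → α → ℂ} {bound : α → ℝ} {U : Set ℂ} (hU : IsOpen U)
    (hmeas : ∀ ζ ∈ U, AEStronglyMeasurable (F ζ) μ)
    (hdiff : ∀ a, DifferentiableOn ℂ (fun ζ => F ζ a) U)
    (hbound : ∀ a, ∀ ζ ∈ U, ‖F ζ a‖ ≤ bound a) (hint : Integrable bound μ) {z : ℂ} (hz : z ∈ U) :
    HasDerivAt (fun ζ => ∫ a, F ζ a ∂μ) (∫ a, deriv (fun ζ => F ζ a) z ∂μ) z := by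
  obtain ⟨ε, hε, hεU⟩ := Metric.isOpen_iff.1 hU z hz
  have hball {w : ℂ} (hw : w ∈ Metric.ball z (ε / 2)) : Metric.closedBall w (ε / 2) ⊆ U :=
    fun v hv => hεU (by
      have := dist_triangle v w z
      simp only [Metric.mem_ball, Metric.mem_closedBall] at *
      linarith)
  refine (hasDerivAt_integral_of_dominated_loc_of_deriv_le
    (F' := fun w a => deriv (fun ζ => F ζ a) w) (Metric.ball_mem_nhds z (half_pos hε))
    (Filter.eventually_of_mem (hU.mem_nhds hz) hmeas)
    (hint.mono' (hmeas z hz) (Filter.Eventually.of_forall fun a => hbound a z hz))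
    (aestronglyMeasurable_deriv_of_forall_mem hU hmeas hdiff hz)
    (bound := fun a => bound a / (ε / 2))
    (Filter.Eventually.of_forall fun a w hw => ?_) (hint.div_const _)
    (Filter.Eventually.of_forall fun a w hw => ?_)).2
  · exact Complex.norm_deriv_le_of_forall_mem_sphere_norm_le (half_pos hε)
      (((hdiff a).mono (hball hw)).diffContOnCl_ball subset_rfl)
      fun v hv => hbound a v (hball hw (Metric.sphere_subset_closedBall hv))
  · exact ((hdiff a).differentiableAt
      (hU.mem_nhds (hball hw (Metric.mem_closedBall_self (half_pos hε).le)))).hasDerivAt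

end Calculus

section GaussianExpansion

variable {K : ℂ → ℂ} {U : Set ℂ} {L : ℝ}

theorem norm_sub_taylor_ofReal_le (hU : ∀ x : ℝ, Metric.closedBall (x : ℂ) 1 ⊆ U)
    (hUo : IsOpen U) (hK : DifferentiableOn ℂ K U) (hL : ∀ z ∈ U, ‖K z‖ ≤ L) (x : ℝ) :
    ‖K x - (K 0 + x * deriv K 0 + x ^ 2 / 2 * iteratedDeriv 2 K 0)‖ ≤ 6 * L * |x| ^ 3 := by
  have hball (w) (hw : w ∈ Complex.im ⁻¹' {0}) : Metric.closedBall w 1 ⊆ U := by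
    have := hU w.re
    rwa [show (w.re : ℂ) = w from Complex.ext rfl hw.symm] at this
  have htaylor := norm_sub_taylor_sum_le (C := 6 * L)
    ((convex_singleton (0 : ℝ)).linear_preimage Complex.imLm) 3
    (fun w hw => hK.analyticOnNhd hUo w (hball w hw (Metric.mem_closedBall_self zero_le_one)))
    (fun w hw => (norm_iteratedDeriv_le_of_forall_mem_closedBall hK one_pos (hball w hw)
      (fun z hz => hL z (hball w hw hz)) 3).trans_eq (by norm_num [Nat.factorial]))
    (c := 0) (z := x) (by simp) (by simp)
  simpa [Finset.sum_range_succ, Nat.factorial] using htaylor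

theorem norm_integral_sub_taylor_le {ν : Measure ℝ} [IsProbabilityMeasure ν]
    (hν : MemLp id 3 ν) (hU : ∀ x : ℝ, Metric.closedBall (x : ℂ) 1 ⊆ U) (hUo : IsOpen U)
    (hK : DifferentiableOn ℂ K U) (hL : ∀ z ∈ U, ‖K z‖ ≤ L) :
    ‖∫ x : ℝ, K x ∂ν
        - (K 0 + (∫ x, x ∂ν) * deriv K 0 + (∫ x, x ^ 2 ∂ν) / 2 * iteratedDeriv 2 K 0)‖ ≤
      6 * L * ∫ x, |x| ^ 3 ∂ν := by
  have hmem (x : ℝ) : (x : ℂ) ∈ U := hU x (Metric.mem_closedBall_self zero_le_one)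
  have hKint : Integrable (fun x : ℝ => K x) ν :=
    .of_bound (hK.continuousOn.comp_continuous Complex.continuous_ofReal hmem).aestronglyMeasurable
      L (.of_forall fun x => hL x (hmem x))
  have hlin : Integrable (fun x : ℝ => K 0 + x * deriv K 0) ν :=
    (integrable_const _).fun_add ((hν.integrable (by norm_num)).ofReal.mul_const _)
  have hquad : Integrable (fun x : ℝ => (x : ℂ) ^ 2 / 2 * iteratedDeriv 2 K 0) ν := by
    refine Integrable.mul_const (Integrable.div_const ?_ _) _
    exact_mod_cast ((hν.mono_exponent (by norm_num)).integrable_sq).ofReal (𝕜 := ℂ)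
  have hpoly : ∫ x : ℝ, (K 0 + x * deriv K 0 + x ^ 2 / 2 * iteratedDeriv 2 K 0) ∂ν =
      K 0 + (∫ x, x ∂ν) * deriv K 0 + (∫ x, x ^ 2 ∂ν) / 2 * iteratedDeriv 2 K 0 := by
    rw [integral_add hlin hquad,
      integral_add (integrable_const _) ((hν.integrable (by norm_num)).ofReal.mul_const _),
      integral_mul_const, integral_mul_const, integral_div]
    norm_cast
    rw [integral_complex_ofReal, integral_const, probReal_univ, one_smul]
  rw [← hpoly, ← integral_sub hKint (hlin.fun_add hquad), ← integral_const_mul]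
  exact norm_integral_le_of_norm_le ((hν.integrable_norm_pow (p := 3) (by norm_num)).const_mul _)
    (.of_forall (norm_sub_taylor_ofReal_le hU hUo hK hL))

theorem integral_sq_gaussianReal (m : ℝ) (v : NNReal) :
    ∫ x, x ^ 2 ∂gaussianReal m v = v + m ^ 2 := by
  have hvar := variance_eq_sub (memLp_id_gaussianReal (μ := m) (v := v) 2)
  simp only [variance_id_gaussianReal, Pi.pow_apply, id_eq, integral_id_gaussianReal] at hvar
  linarith

theorem exists_integral_abs_pow_three_gaussianReal_le :
    ∃ C, 0 ≤ C ∧ ∀ h : NNReal, h ≤ 1 →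
      ∫ x, |x| ^ 3 ∂gaussianReal (-(h / 2)) h ≤ C * (h * √h) := by
  have hint : Integrable (fun x : ℝ => (|x| + 1) ^ 3) (gaussianReal 0 1) := by
    have := ((memLp_id_gaussianReal (μ := 0) (v := 1) 3).norm.add
      (memLp_const (1 : ℝ))).integrable_norm_pow (p := 3) (by norm_num)
    refine this.congr (.of_forall fun x => ?_)
    simp [abs_of_nonneg (add_nonneg (abs_nonneg x) zero_le_one)]
  refine ⟨∫ x, (|x| + 1) ^ 3 ∂gaussianReal 0 1, integral_nonneg fun x => by positivity,
    fun h hh => ?_⟩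
  have hsq : √(h : ℝ) ^ 2 = h := Real.sq_sqrt h.coe_nonneg
  have hsqrt : √(h : ℝ) ≤ 1 := Real.sqrt_le_one.2 (by exact_mod_cast hh)
  have hmap : gaussianReal (-(h / 2)) h = (gaussianReal 0 1).map fun x => √h * x + -(h / 2) := by
    rw [← Function.comp_def (fun x : ℝ => x + -(h / 2 : ℝ)) (fun x => √h * x),
      ← Measure.map_map (by fun_prop) (by fun_prop), gaussianReal_map_const_mul,
      gaussianReal_map_add_const]
    congr 1
    · simp
    · ext; simp [hsq]
  have hscale (x : ℝ) : |√h * x + -(h / 2)| ≤ √h * (|x| + 1) := by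
    calc |√h * x + -(h / 2)| ≤ √h * |x| + h / 2 := by
          refine (abs_add_le _ _).trans_eq ?_
          rw [abs_mul, abs_neg, abs_of_nonneg (Real.sqrt_nonneg _),
            abs_of_nonneg (div_nonneg h.coe_nonneg zero_le_two)]
      _ ≤ √h * (|x| + 1) := by nlinarith [Real.sqrt_nonneg (h : ℝ)]
  rw [hmap, integral_map (by fun_prop) (by fun_prop), mul_comm, ← integral_const_mul]
  refine integral_mono_of_nonneg (.of_forall fun x => by positivity) (hint.const_mul _)
    (.of_forall fun x => ?_)
  calc |√h * x + -(h / 2)| ^ 3 ≤ (√h * (|x| + 1)) ^ 3 := by gcongr; exact hscale x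
    _ = h * √h * (|x| + 1) ^ 3 := by rw [mul_pow, pow_succ √(h : ℝ), hsq]

theorem exists_norm_integral_gaussianReal_sub_le :
    ∃ C, 0 ≤ C ∧ ∀ (K : ℂ → ℂ) (U : Set ℂ) (L : ℝ) (h : NNReal), h ≤ 1 →
      (∀ x : ℝ, Metric.closedBall (x : ℂ) 1 ⊆ U) → IsOpen U → DifferentiableOn ℂ K U →
      (∀ z ∈ U, ‖K z‖ ≤ L) →
      ‖∫ x : ℝ, K x ∂gaussianReal (-(h / 2)) h
        - (K 0 + h * ((iteratedDeriv 2 K 0 - deriv K 0) / 2))‖ ≤ C * L * (h * √h) := by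
  obtain ⟨C, hC0, hC⟩ := exists_integral_abs_pow_three_gaussianReal_le
  refine ⟨6 * C + 1, by positivity, fun K U L h hh hU hUo hK hL => ?_⟩
  have hU0 : Metric.closedBall (0 : ℂ) 1 ⊆ U := by simpa using hU 0
  have hL0 : 0 ≤ L := (norm_nonneg _).trans (hL 0 (hU0 (by simp)))
  have htaylor := norm_integral_sub_taylor_le
    (memLp_id_gaussianReal (μ := -(h / 2)) (v := h) 3) hU hUo hK hL
  rw [integral_id_gaussianReal, integral_sq_gaussianReal] at htaylor
  have hsecond : ‖iteratedDeriv 2 K 0‖ ≤ 2 * L :=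
    (norm_iteratedDeriv_le_of_forall_mem_closedBall hK one_pos hU0
      (fun z hz => hL z (hU0 hz)) 2).trans_eq (by norm_num [Nat.factorial])
  have hle : (h : ℝ) ≤ √h := Real.le_sqrt_self_iff.2 hh
  have hrem : ‖((h ^ 2 / 8 : ℝ) : ℂ) * iteratedDeriv 2 K 0‖ ≤ L * (h * √h) := by
    rw [norm_mul, Complex.norm_of_nonneg (by positivity)]
    calc (h : ℝ) ^ 2 / 8 * ‖iteratedDeriv 2 K 0‖ ≤ h * √h / 8 * (2 * L) := by
          rw [pow_two]; gcongr
      _ ≤ L * (h * √h) := by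
          nlinarith [mul_nonneg hL0 (mul_nonneg h.coe_nonneg (Real.sqrt_nonneg h))]
  calc _ = ‖(∫ x : ℝ, K x ∂gaussianReal (-(h / 2)) h
          - (K 0 + ((-(h / 2) : ℝ) : ℂ) * deriv K 0
            + (((h : ℝ) + (-(h / 2) : ℝ) ^ 2 : ℝ) : ℂ) / 2 * iteratedDeriv 2 K 0))
          + ((h ^ 2 / 8 : ℝ) : ℂ) * iteratedDeriv 2 K 0‖ := by
        congr 1; push_cast; ring
    _ ≤ 6 * L * (C * (h * √h)) + L * (h * √h) := by
        refine (norm_add_le _ _).trans (add_le_add (htaylor.trans ?_) hrem)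
        gcongr
        exact hC h hh
    _ = (6 * C + 1) * L * (h * √h) := by ring

end GaussianExpansion

section Generator

/-- The open right half-plane, the complexification of the state space `(0, ∞)`. -/
def rightHalfPlane : Set ℂ := {ζ | 0 < ζ.re}

theorem isOpen_rightHalfPlane : IsOpen rightHalfPlane :=
  isOpen_lt continuous_const Complex.continuous_re

theorem ofReal_mem_rightHalfPlane {r : ℝ} : (r : ℂ) ∈ rightHalfPlane ↔ 0 < r := Iff.rfl

theorem ne_zero_of_mem_rightHalfPlane {ζ : ℂ} (hζ : ζ ∈ rightHalfPlane) : ζ ≠ 0 := by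
  rintro rfl
  exact lt_irrefl (0 : ℝ) hζ

theorem closedBall_subset_rightHalfPlane {w : ℝ} (hw : 0 < w) :
    Metric.closedBall (w : ℂ) (w / 2) ⊆ rightHalfPlane := fun v hv => by
  have := (Complex.abs_re_le_norm (v - w)).trans (mem_closedBall_iff_norm.1 hv)
  rw [Complex.sub_re, Complex.ofReal_re, abs_le] at this
  exact show 0 < v.re by linarith

/-- The infinitesimal generator `(ζ + σ) ∂ + (ζ² / 2) ∂²` of the diffusion
`t ↦ (ζ + σ A_t) / M_t`. -/
def generator (σ : ℝ) (p : ℂ → ℂ) (ζ : ℂ) : ℂ :=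
  (ζ + σ) * deriv p ζ + ζ ^ 2 / 2 * iteratedDeriv 2 p ζ

/-- One step of length `h` of the Euler scheme for the semigroup of `t ↦ (ζ + σ A_t) / M_t`: over
a time interval of length `h`, `A` grows by `h` times the initial value of `M` and `M` is multiplied
by the exponential of an independent Gaussian variable. -/
def eulerStep (σ : ℝ) (h : NNReal) (q : ℂ → ℂ) (ζ : ℂ) : ℂ :=
  ∫ y : ℝ, q ((ζ + σ * h) / Real.exp y) ∂gaussianReal (-(h / 2)) h

theorem hasDerivAt_iteratedDeriv {p : ℂ → ℂ} {w : ℂ} (hp : AnalyticAt ℂ p w) (n : ℕ) :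
    HasDerivAt (iteratedDeriv n p) (iteratedDeriv (n + 1) p w) w := by
  rw [iteratedDeriv_succ, iteratedDeriv_eq_iterate]
  exact (hp.iterated_deriv n).differentiableAt.hasDerivAt

theorem hasDerivAt_generator_zero {p : ℂ → ℂ} {w : ℂ} (hp : AnalyticAt ℂ p w) :
    HasDerivAt (generator 0 p)
      (deriv p w + 2 * (w * iteratedDeriv 2 p w) + w ^ 2 * iteratedDeriv 3 p w / 2) w := by
  have h1 := hasDerivAt_iteratedDeriv hp 1
  rw [iteratedDeriv_one] at h1
  refine ((((hasDerivAt_id' w).add_const ((0 : ℝ) : ℂ)).mul h1).fun_add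
    ((((hasDerivAt_id' w).fun_pow 2).div_const 2).mul
      (hasDerivAt_iteratedDeriv hp 2))).congr_deriv ?_
  push_cast
  ring

theorem generator_const_mul (σ : ℝ) (c : ℂ) (p : ℂ → ℂ) (ζ : ℂ) :
    generator σ (fun z => c * p z) ζ = c * generator σ p ζ := by
  simp only [generator, deriv_const_mul_field', iteratedDeriv_succ, iteratedDeriv_zero]
  ring

variable {p : ℂ → ℂ}

theorem hasDerivAt_comp_mul_exp_neg {f : ℂ → ℂ} {θ z : ℂ}
    (hf : DifferentiableAt ℂ f (θ * Complex.exp (-z))) :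
    HasDerivAt (fun z => f (θ * Complex.exp (-z)))
      (-(θ * Complex.exp (-z) * deriv f (θ * Complex.exp (-z)))) z := by
  have hinner : HasDerivAt (fun z => θ * Complex.exp (-z)) (-(θ * Complex.exp (-z))) z := by
    simpa using ((hasDerivAt_neg z).cexp).const_mul θ
  exact (hf.hasDerivAt.comp z hinner).congr_deriv (by ring)

theorem iteratedDeriv_two_sub_deriv_comp_mul_exp_neg {θ : ℂ} (hp : AnalyticAt ℂ p θ) :
    (iteratedDeriv 2 (fun z => p (θ * Complex.exp (-z))) 0
      - deriv (fun z => p (θ * Complex.exp (-z))) 0) / 2 = generator 0 p θ := by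
  have hθ : θ * Complex.exp (-0) = θ := by simp
  have hcont : Filter.Tendsto (fun z => θ * Complex.exp (-z)) (nhds 0) (nhds θ) := by
    simpa using (by fun_prop : Continuous fun z => θ * Complex.exp (-z)).tendsto 0
  have hderiv : deriv (fun z => p (θ * Complex.exp (-z))) =ᶠ[nhds 0]
      fun z => (fun w => -(w * deriv p w)) (θ * Complex.exp (-z)) := by
    filter_upwards [hcont.eventually hp.eventually_analyticAt] with z hz
    exact (hasDerivAt_comp_mul_exp_neg hz.differentiableAt).deriv
  have hw : HasDerivAt (fun w => -(w * deriv p w)) (-(deriv p θ + θ * iteratedDeriv 2 p θ)) θ := by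
    have h1 := hasDerivAt_iteratedDeriv hp 1
    rw [iteratedDeriv_one] at h1
    simpa using ((hasDerivAt_id' θ).fun_mul h1).fun_neg
  have hsecond := hasDerivAt_comp_mul_exp_neg (θ := θ) (z := 0)
    (by rw [hθ]; exact hw.differentiableAt)
  rw [iteratedDeriv_succ, iteratedDeriv_one, hderiv.deriv_eq, hsecond.deriv, hderiv.self_of_nhds]
  simp only [hθ, hw.deriv, generator, Complex.ofReal_zero]
  ring

/-- The function `p` is exponentially small near the positive real number `w`, in such a way that
all its derivatives at `w` remain bounded as `w` tends to `0`. The exponent is a lower bound for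
`Re (2 / v)` on the disc. -/
def IsDampedAt (p : ℂ → ℂ) (w : ℝ) : Prop :=
  ∀ v ∈ Metric.closedBall (w : ℂ) (w / 2), ‖p v‖ ≤ Real.exp (-(4 / (9 * w)))

theorem exp_neg_div_le {w : ℝ} (hw : 0 < w) (j : ℕ) :
    Real.exp (-(4 / (9 * w))) ≤ j.factorial * (9 / 4) ^ j * w ^ j := by
  have hx : 0 < 4 / (9 * w) := by positivity
  rw [Real.exp_neg]
  calc (Real.exp (4 / (9 * w)))⁻¹ ≤ ((4 / (9 * w)) ^ j / j.factorial)⁻¹ :=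
        inv_anti₀ (by positivity) (Real.pow_div_factorial_le_exp _ hx.le j)
    _ = j.factorial * (9 / 4) ^ j * w ^ j := by
        rw [inv_div, div_eq_mul_inv, ← inv_pow, inv_div, mul_assoc, ← mul_pow]
        ring_nf

theorem IsDampedAt.norm_pow_mul_iteratedDeriv_le {w : ℝ} (hd : IsDampedAt p w)
    (hp : DifferentiableOn ℂ p rightHalfPlane) (hw : 0 < w) (i j : ℕ) :
    ‖(w : ℂ) ^ i * iteratedDeriv (i + j) p w‖ ≤
      (i + j).factorial * 2 ^ (i + j) * (j.factorial * (9 / 4) ^ j) := by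
  have hcauchy := norm_iteratedDeriv_le_of_forall_mem_closedBall hp (half_pos hw)
    (closedBall_subset_rightHalfPlane hw) hd (i + j)
  rw [norm_mul, norm_pow, Complex.norm_of_nonneg hw.le]
  calc w ^ i * ‖iteratedDeriv (i + j) p w‖
      ≤ w ^ i * ((i + j).factorial * (j.factorial * (9 / 4) ^ j * w ^ j) / (w / 2) ^ (i + j)) := by
        gcongr
        refine hcauchy.trans ?_
        gcongr
        exact exp_neg_div_le hw j
    _ = _ := by
        rw [div_pow w, pow_add w]
        field_simp

theorem convex_image_ofReal {s : Set ℝ} (hs : Convex ℝ s) : Convex ℝ (Complex.ofReal '' s) :=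
  hs.linear_image Complex.ofRealCLM.toLinearMap

theorem norm_generator_zero_sub_le {r θ : ℝ} (hp : DifferentiableOn ℂ p rightHalfPlane)
    (hr : 0 < r) (hθ : 0 < θ) (hd : ∀ w ∈ uIcc r θ, IsDampedAt p w) :
    ‖generator 0 p θ - generator 0 p r‖ ≤ 95 * |θ - r| := by
  have hpos {w} (hw : w ∈ uIcc r θ) : 0 < w := (lt_min hr hθ).trans_le hw.1
  have hderiv : ∀ w ∈ uIcc r θ, ‖deriv p w + 2 * (w * iteratedDeriv 2 p w)
      + w ^ 2 * iteratedDeriv 3 p w / 2‖ ≤ 95 := by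
    intro w hw
    have h1 := (hd w hw).norm_pow_mul_iteratedDeriv_le hp (hpos hw) 0 1
    have h2 := (hd w hw).norm_pow_mul_iteratedDeriv_le hp (hpos hw) 1 1
    have h3 := (hd w hw).norm_pow_mul_iteratedDeriv_le hp (hpos hw) 2 1
    norm_num [Nat.factorial] at h1 h2 h3
    refine norm_add₃_le.trans ?_
    norm_num
    linarith
  have hmvt := Convex.norm_image_sub_le_of_norm_hasDerivWithin_le (f := generator 0 p)
    (f' := fun w => deriv p w + 2 * (w * iteratedDeriv 2 p w) + w ^ 2 * iteratedDeriv 3 p w / 2)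
    (s := Complex.ofReal '' uIcc r θ)
    (forall_mem_image.2 fun w hw => (hasDerivAt_generator_zero
      (hp.analyticOnNhd isOpen_rightHalfPlane w (hpos hw))).hasDerivWithinAt)
    (forall_mem_image.2 hderiv) (convex_image_ofReal (convex_uIcc r θ))
    (mem_image_of_mem _ left_mem_uIcc) (mem_image_of_mem _ right_mem_uIcc)
  rwa [← Complex.ofReal_sub, Complex.norm_real, Real.norm_eq_abs] at hmvt

theorem norm_sub_sub_deriv_mul_le {r θ : ℝ} (hp : DifferentiableOn ℂ p rightHalfPlane)
    (hr : 0 < r) (hθ : 0 < θ) (hd : ∀ w ∈ uIcc r θ, IsDampedAt p w) :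
    ‖p θ - (p r + (θ - r) * deriv p r)‖ ≤ 81 * |θ - r| ^ 2 := by
  have hpos {w} (hw : w ∈ uIcc r θ) : 0 < w := (lt_min hr hθ).trans_le hw.1
  have htaylor := norm_sub_taylor_sum_le (C := 81) (convex_image_ofReal (convex_uIcc r θ)) 2
    (forall_mem_image.2 fun w hw => hp.analyticOnNhd isOpen_rightHalfPlane w (hpos hw))
    (forall_mem_image.2 fun w hw => by
      simpa [Nat.factorial, show (2 * 2 ^ 2 * (2 * (9 / 4) ^ 2) : ℝ) = 81 by norm_num]
        using (hd w hw).norm_pow_mul_iteratedDeriv_le hp (hpos hw) 0 2)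
    (mem_image_of_mem _ left_mem_uIcc) (mem_image_of_mem _ right_mem_uIcc)
  rw [← Complex.ofReal_sub, Complex.norm_real, Real.norm_eq_abs] at htaylor
  simpa [Finset.sum_range_succ] using htaylor

theorem mul_exp_neg_mem_rightHalfPlane {θ : ℝ} (hθ : 0 < θ) {z : ℂ} (hz : |z.im| < 3 / 2) :
    (θ : ℂ) * Complex.exp (-z) ∈ rightHalfPlane := by
  have hcos : 0 < Real.cos (-z.im) :=
    Real.cos_pos_of_mem_Ioo (by constructor <;> linarith [abs_lt.1 hz, Real.pi_gt_three])
  have := mul_pos hθ (mul_pos (Real.exp_pos (-z.re)) hcos)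
  simpa [rightHalfPlane, Complex.exp_re] using this

theorem exists_norm_eulerStep_sub_generator_zero_le :
    ∃ C, 0 ≤ C ∧ ∀ (p : ℂ → ℂ) (σ : ℝ) (h : NNReal) (r : ℝ),
      DifferentiableOn ℂ p rightHalfPlane → (∀ ζ ∈ rightHalfPlane, ‖p ζ‖ ≤ 1) → h ≤ 1 →
      0 < r + σ * h →
      ‖eulerStep σ h p r - (p (r + σ * h : ℝ) + h * generator 0 p (r + σ * h : ℝ))‖ ≤
        C * (h * √h) := by
  obtain ⟨C, hC0, hC⟩ := exists_norm_integral_gaussianReal_sub_le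
  refine ⟨C, hC0, fun p σ h r hp hp1 hh hθ => ?_⟩
  have hstrip := hC (fun z => p ((r + σ * h : ℝ) * Complex.exp (-z))) {z | |z.im| < 3 / 2} 1 h hh
    (fun x z hz => by
      have := (Complex.abs_im_le_norm (z - x)).trans (mem_closedBall_iff_norm.1 hz)
      rw [Complex.sub_im, Complex.ofReal_im, sub_zero] at this
      exact this.trans_lt (by norm_num))
    (isOpen_lt (by fun_prop) (by fun_prop))
    (hp.comp (by fun_prop) fun z hz => mul_exp_neg_mem_rightHalfPlane hθ hz)
    (fun z hz => hp1 _ (mul_exp_neg_mem_rightHalfPlane hθ hz))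
  rw [iteratedDeriv_two_sub_deriv_comp_mul_exp_neg
    (hp.analyticOnNhd isOpen_rightHalfPlane _ hθ), mul_one] at hstrip
  simpa [eulerStep, div_eq_mul_inv, ← Complex.exp_neg] using hstrip

theorem exists_norm_eulerStep_sub_le :
    ∃ C, 0 ≤ C ∧ ∀ (p : ℂ → ℂ) (σ : ℝ) (h : NNReal) (r : ℝ),
      DifferentiableOn ℂ p rightHalfPlane → (∀ ζ ∈ rightHalfPlane, ‖p ζ‖ ≤ 1) → |σ| ≤ 1 → h ≤ 1 →
      0 < r → 0 < r + σ * h → (∀ w ∈ uIcc r (r + σ * h), IsDampedAt p w) →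
      ‖eulerStep σ h p r - (p r + h * generator σ p r)‖ ≤ C * (h * √h) := by
  obtain ⟨C, hC0, hC⟩ := exists_norm_eulerStep_sub_generator_zero_le
  refine ⟨C + 176, by positivity, fun p σ h r hp hp1 hσ hh hr hθ hd => ?_⟩
  have hgauss := hC p σ h r hp hp1 hh hθ
  have hdrift := norm_sub_sub_deriv_mul_le hp hr hθ hd
  have hgen := norm_generator_zero_sub_le hp hr hθ hd
  set θ : ℝ := r + σ * h with hθdef
  have hθr : |θ - r| ≤ h := by
    rw [hθdef, add_sub_cancel_left, abs_mul, abs_of_nonneg h.coe_nonneg]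
    exact mul_le_of_le_one_left h.coe_nonneg hσ
  have hle : (h : ℝ) ≤ √h := Real.le_sqrt_self_iff.2 hh
  calc _ = ‖(eulerStep σ h p r - (p θ + h * generator 0 p θ))
          + (p θ - (p r + (θ - r) * deriv p r))
          + h * (generator 0 p θ - generator 0 p r)‖ := by
        congr 1
        simp only [generator, hθdef]
        push_cast
        ring
    _ ≤ C * (h * √h) + 81 * |θ - r| ^ 2 + h * (95 * |θ - r|) := by
        refine norm_add₃_le.trans ?_
        rw [norm_mul, Complex.norm_of_nonneg h.coe_nonneg]
        gcongr
    _ ≤ C * (h * √h) + 81 * (h * √h) + h * (95 * √h) := by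
        gcongr
        · rw [pow_two]
          gcongr
          exact hθr.trans hle
        · exact hθr.trans hle
    _ = (C + 176) * (h * √h) := by ring

end Generator

section Intertwining

variable {q : ℂ → ℂ} {σ : ℝ} {h : NNReal}

theorem measurable_eulerStep (hq : Measurable q) : Measurable (eulerStep σ h q) := by
  have hjoint : StronglyMeasurable fun x : ℂ × ℝ => q ((x.1 + σ * h) / Real.exp x.2) :=
    (hq.comp (by fun_prop)).stronglyMeasurable
  exact hjoint.integral_prod_right.measurable

theorem norm_eulerStep_le {L : ℝ} (hL : ∀ ζ, ‖q ζ‖ ≤ L) (ζ : ℂ) : ‖eulerStep σ h q ζ‖ ≤ L :=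
  (norm_integral_le_of_norm_le_const (.of_forall fun _ => hL _)).trans_eq (by simp)

theorem norm_eulerStep_sub_le {f g : ℂ → ℂ} {L ε : ℝ} (hf : Measurable f) (hfL : ∀ ζ, ‖f ζ‖ ≤ L)
    (hg : Measurable g) (hgL : ∀ ζ, ‖g ζ‖ ≤ L) (hfg : ∀ r : ℝ, ‖f r - g r‖ ≤ ε) (r : ℝ) :
    ‖eulerStep σ h f r - eulerStep σ h g r‖ ≤ ε := by
  have hint {f : ℂ → ℂ} (hf : Measurable f) (hfL : ∀ ζ, ‖f ζ‖ ≤ L) :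
      Integrable (fun y : ℝ => f ((r + σ * h) / Real.exp y)) (gaussianReal (-(h / 2)) h) :=
    .of_bound (hf.comp (by fun_prop)).aestronglyMeasurable L (.of_forall fun y => hfL _)
  rw [eulerStep, eulerStep, ← integral_sub (hint hf hfL) (hint hg hgL)]
  refine (norm_integral_le_of_norm_le_const (.of_forall fun y => ?_)).trans_eq
    (by rw [probReal_univ, mul_one])
  exact_mod_cast hfg ((r + σ * h) / Real.exp y)

/-- A measurable function on the plane which is bounded by one and is holomorphic on the right
half-plane: the class of test functions for the Euler schemes, since `eulerStep 1` preserves it.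
Away from the half-plane only measurability and the bound are required. -/
structure IsSchur (q : ℂ → ℂ) : Prop where
  measurable : Measurable q
  norm_le_one : ∀ ζ, ‖q ζ‖ ≤ 1
  differentiableOn : DifferentiableOn ℂ q rightHalfPlane

theorem IsSchur.mul {p : ℂ → ℂ} (hp : IsSchur p) (hq : IsSchur q) :
    IsSchur fun ζ => p ζ * q ζ where
  measurable := hp.measurable.mul hq.measurable
  norm_le_one ζ := by
    rw [norm_mul]
    exact mul_le_one₀ (hp.norm_le_one ζ) (norm_nonneg _) (hq.norm_le_one ζ)
  differentiableOn := hp.differentiableOn.fun_mul hq.differentiableOn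

theorem isSchur_const {c : ℂ} (hc : ‖c‖ ≤ 1) : IsSchur fun _ => c where
  measurable := measurable_const
  norm_le_one _ := hc
  differentiableOn := differentiableOn_const c

theorem IsSchur.pow (hq : IsSchur q) (n : ℕ) : IsSchur fun ζ => q ζ ^ n := by
  induction n with
  | zero => simpa using isSchur_const (c := 1) (by simp)
  | succ n ih => simpa only [pow_succ] using ih.mul hq

theorem IsSchur.eulerStep_one (hq : IsSchur q) (h : NNReal) : IsSchur (eulerStep 1 h q) where
  measurable := measurable_eulerStep hq.measurable
  norm_le_one := norm_eulerStep_le hq.norm_le_one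
  differentiableOn ζ hζ := by
    have hmaps (y : ℝ) (ζ : ℂ) (hζ : ζ ∈ rightHalfPlane) :
        (ζ + (1 : ℝ) * h) / Real.exp y ∈ rightHalfPlane := by
      have hre : 0 < (ζ.re + h) / Real.exp y :=
        div_pos (add_pos_of_pos_of_nonneg hζ h.coe_nonneg) (Real.exp_pos y)
      rw [rightHalfPlane, mem_ofPred_eq, Complex.div_ofReal_re]
      simpa using hre
    exact (hasDerivAt_integral_of_norm_le isOpen_rightHalfPlane
      (fun ζ _ => (hq.measurable.comp (by fun_prop)).aestronglyMeasurable)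
      (fun y => hq.differentiableOn.comp (by fun_prop) (hmaps y))
      (fun y ζ _ => hq.norm_le_one _) (integrable_const 1) hζ)
      |>.differentiableAt.differentiableWithinAt

theorem IsSchur.iterate_eulerStep_one (hq : IsSchur q) (h : NNReal) (n : ℕ) :
    IsSchur ((eulerStep 1 h)^[n] q) :=
  Function.Iterate.rec IsSchur hq (fun _ hp => hp.eulerStep_one h) n

/-- The function `exp (-2 / ζ)` on the right half-plane, extended by zero. It is the harmonic
function which conditions `t ↦ (ζ - A_t) / M_t` never to leave the half-plane. -/
def killedExp (ζ : ℂ) : ℂ := if 0 < ζ.re then Complex.exp (-(2 / ζ)) else 0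

theorem killedExp_of_mem {ζ : ℂ} (hζ : ζ ∈ rightHalfPlane) :
    killedExp ζ = Complex.exp (-(2 / ζ)) := if_pos hζ

theorem killedExp_ofReal (r : ℝ) : killedExp r = expNegInvGlue (r / 2) := by
  rcases le_or_gt r 0 with hr | hr
  · rw [killedExp, if_neg (by simpa using hr), expNegInvGlue.zero_of_nonpos (by linarith),
      Complex.ofReal_zero]
  · rw [killedExp_of_mem (ofReal_mem_rightHalfPlane.2 hr), expNegInvGlue,
      if_neg (by linarith), inv_div]
    push_cast
    rfl

theorem norm_killedExp_of_mem {ζ : ℂ} (hζ : ζ ∈ rightHalfPlane) :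
    ‖killedExp ζ‖ = Real.exp (-(2 * (ζ.re / Complex.normSq ζ))) := by
  rw [killedExp_of_mem hζ, Complex.norm_exp, div_eq_mul_inv]
  simp

theorem isSchur_killedExp : IsSchur killedExp where
  measurable := Measurable.ite (measurableSet_lt measurable_const Complex.measurable_re)
    (by fun_prop) measurable_const
  norm_le_one ζ := by
    by_cases hζ : ζ ∈ rightHalfPlane
    · rw [norm_killedExp_of_mem hζ, Real.exp_le_one_iff, neg_nonpos]
      exact mul_nonneg zero_le_two (div_nonneg (le_of_lt hζ) (Complex.normSq_nonneg ζ))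
    · simp [killedExp, if_neg (show ¬0 < ζ.re from hζ)]
  differentiableOn := by
    refine DifferentiableOn.congr (f := fun ζ => Complex.exp (-(2 / ζ))) (fun ζ hζ => ?_)
      fun ζ hζ => killedExp_of_mem hζ
    exact (((differentiableAt_const (2 : ℂ)).fun_div differentiableAt_fun_id
      (ne_zero_of_mem_rightHalfPlane hζ)).fun_neg.cexp).differentiableWithinAt

theorem isDampedAt_killedExp {w : ℝ} (hw : 0 < w) : IsDampedAt killedExp w := by
  intro v hv
  rw [norm_killedExp_of_mem (closedBall_subset_rightHalfPlane hw hv), Real.exp_le_exp,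
    neg_le_neg_iff]
  rw [mem_closedBall_iff_norm] at hv
  have hre : w / 2 ≤ v.re := by
    have := (Complex.abs_re_le_norm (v - w)).trans hv
    rw [Complex.sub_re, Complex.ofReal_re, abs_le] at this
    linarith
  have hnorm : Complex.normSq v ≤ (3 * w / 2) ^ 2 := by
    rw [Complex.normSq_eq_norm_sq]
    gcongr
    have := norm_le_norm_add_norm_sub' v w
    rw [Complex.norm_of_nonneg hw.le] at this
    linarith
  have hpos : 0 < Complex.normSq v := Complex.normSq_pos.2 (by rintro rfl; simp at hre; linarith)
  calc 4 / (9 * w) = 2 * (w / 2 / (3 * w / 2) ^ 2) := by field_simp; norm_num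
    _ ≤ 2 * (v.re / Complex.normSq v) := by
        gcongr
        exact (half_pos hw).le.trans hre

theorem hasDerivAt_killedExp_mul {f : ℂ → ℂ} {f' ζ : ℂ} (hζ : ζ ∈ rightHalfPlane)
    (hf : HasDerivAt f f' ζ) :
    HasDerivAt (fun z => killedExp z * f z) (killedExp ζ * (2 / ζ ^ 2 * f ζ + f')) ζ := by
  have hne := ne_zero_of_mem_rightHalfPlane hζ
  have hexp : HasDerivAt killedExp (killedExp ζ * (2 / ζ ^ 2)) ζ := by
    rw [killedExp_of_mem hζ]
    refine HasDerivAt.congr_of_eventuallyEq ?_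
      (Filter.eventually_of_mem (isOpen_rightHalfPlane.mem_nhds hζ) fun z hz => killedExp_of_mem hz)
    simpa [div_eq_mul_inv] using ((hasDerivAt_inv hne).const_mul 2).fun_neg.cexp
  exact (hexp.mul hf).congr_deriv (by ring)

theorem generator_killedExp_mul (hq : DifferentiableOn ℂ q rightHalfPlane) {ζ : ℂ}
    (hζ : ζ ∈ rightHalfPlane) :
    generator (-1) (fun z => killedExp z * q z) ζ = killedExp ζ * generator 1 q ζ := by
  have hne := ne_zero_of_mem_rightHalfPlane hζ
  have hqan := hq.analyticOnNhd isOpen_rightHalfPlane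
  have hderiv : deriv (fun z => killedExp z * q z) =ᶠ[nhds ζ]
      fun z => killedExp z * (2 / z ^ 2 * q z + deriv q z) := by
    filter_upwards [isOpen_rightHalfPlane.mem_nhds hζ] with z hz
    exact (hasDerivAt_killedExp_mul hz (hqan z hz).differentiableAt.hasDerivAt).deriv
  have hinner : HasDerivAt (fun z => 2 / z ^ 2 * q z + deriv q z)
      (-(4 / ζ ^ 3) * q ζ + 2 / ζ ^ 2 * deriv q ζ + iteratedDeriv 2 q ζ) ζ := by
    have h1 := hasDerivAt_iteratedDeriv (hqan ζ hζ) 1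
    rw [iteratedDeriv_one] at h1
    have hsq : HasDerivAt (fun z : ℂ => 2 / z ^ 2) (-(4 / ζ ^ 3)) ζ := by
      refine ((hasDerivAt_const ζ (2 : ℂ)).fun_div ((hasDerivAt_id' ζ).fun_pow 2)
        (pow_ne_zero 2 hne)).congr_deriv ?_
      field_simp
      norm_num [mul_comm]
    exact (hsq.fun_mul (hqan ζ hζ).differentiableAt.hasDerivAt).fun_add h1
  rw [generator, generator, iteratedDeriv_succ, iteratedDeriv_one, hderiv.deriv_eq,
    hderiv.self_of_nhds, (hasDerivAt_killedExp_mul hζ hinner).deriv]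
  push_cast
  field_simp
  ring

theorem eulerStep_neg_one_killedExp_mul_eq_zero {r : ℝ} (hr : r ≤ h) :
    eulerStep (-1) h (fun z => killedExp z * q z) r = 0 := by
  refine integral_eq_zero_of_ae (.of_forall fun y => ?_)
  have harg : ((r : ℂ) + (-1 : ℝ) * h) / Real.exp y = ((r - h) / Real.exp y : ℝ) := by
    push_cast
    ring
  have hnonpos : (r - h) / Real.exp y / 2 ≤ 0 :=
    div_nonpos_of_nonpos_of_nonneg
      (div_nonpos_of_nonpos_of_nonneg (sub_nonpos.2 hr) (Real.exp_pos y).le) zero_le_two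
  simp only [harg, killedExp_ofReal, expNegInvGlue.zero_of_nonpos hnonpos, Complex.ofReal_zero,
    zero_mul, Pi.zero_apply]

theorem norm_killedExp_ofReal_le {r w : ℝ} (hr : 0 < r) (hrw : r ≤ w) :
    ‖killedExp r‖ ≤ Real.exp (-(4 / (9 * w))) := by
  refine (isDampedAt_killedExp hr r (Metric.mem_closedBall_self (half_pos hr).le)).trans ?_
  gcongr

theorem norm_killedExp_ofReal_le_sq {r : ℝ} (hr : r ≤ h) : ‖killedExp r‖ ≤ 11 * h ^ 2 := by
  rcases le_or_gt r 0 with hr0 | hr0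
  · rw [killedExp_ofReal, expNegInvGlue.zero_of_nonpos (by linarith)]
    simp
  · have hexp := exp_neg_div_le (hr0.trans_le hr) 2
    norm_num [Nat.factorial] at hexp
    linarith [norm_killedExp_ofReal_le hr0 hr, sq_nonneg (h : ℝ)]

theorem norm_eulerStep_killedExp_mul_sub_le_of_le {r : ℝ} (hq : IsSchur q) (hr : r ≤ h)
    (hh : h ≤ 1) :
    ‖eulerStep (-1) h (fun z => killedExp z * q z) r - killedExp r * eulerStep 1 h q r‖ ≤
      11 * (h * √h) := by
  have hle : (h : ℝ) ≤ √h := Real.le_sqrt_self_iff.2 hh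
  rw [eulerStep_neg_one_killedExp_mul_eq_zero hr, zero_sub, norm_neg, norm_mul]
  calc ‖killedExp r‖ * ‖eulerStep 1 h q r‖ ≤ 11 * (h : ℝ) ^ 2 * 1 := by
        gcongr
        · exact norm_killedExp_ofReal_le_sq hr
        · exact norm_eulerStep_le hq.norm_le_one r
    _ ≤ 11 * (h * √h) := by
        rw [mul_one, pow_two]
        gcongr

theorem exists_norm_eulerStep_killedExp_mul_sub_le :
    ∃ C, 0 ≤ C ∧ ∀ (q : ℂ → ℂ) (h : NNReal) (r : ℝ), IsSchur q → h ≤ 1 →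
      ‖eulerStep (-1) h (fun z => killedExp z * q z) r - killedExp r * eulerStep 1 h q r‖ ≤
        C * (h * √h) := by
  obtain ⟨C, hC0, hC⟩ := exists_norm_eulerStep_sub_le
  refine ⟨11 + 2 * C, by positivity, fun q h r hq hh => ?_⟩
  have hh0 := h.coe_nonneg
  rcases le_or_gt r h with hr | hr
  · refine (norm_eulerStep_killedExp_mul_sub_le_of_le hq hr hh).trans ?_
    gcongr
    linarith
  have hr0 : 0 < r := hh0.trans_lt hr
  have hprod := isSchur_killedExp.mul hq
  have hconst := (isSchur_const (isSchur_killedExp.norm_le_one r)).mul hq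
  have hkilled := hC _ (-1) h r hprod.differentiableOn (fun ζ _ => hprod.norm_le_one ζ)
    (by norm_num) hh hr0 (by linarith) fun w hw v hv => by
      have hw0 : 0 < w := (lt_min hr0 (by linarith)).trans_le hw.1
      rw [norm_mul]
      exact (mul_le_of_le_one_right (norm_nonneg _) (hq.norm_le_one v)).trans
        (isDampedAt_killedExp hw0 v hv)
  have hfree := hC _ 1 h r hconst.differentiableOn (fun ζ _ => hconst.norm_le_one ζ)
    (by norm_num) hh hr0 (by linarith) fun w hw v hv => by
      rw [uIcc_of_le (by linarith)] at hw
      rw [norm_mul]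
      exact (mul_le_of_le_one_right (norm_nonneg _) (hq.norm_le_one v)).trans
        (norm_killedExp_ofReal_le hr0 hw.1)
  rw [generator_killedExp_mul hq.differentiableOn (ofReal_mem_rightHalfPlane.2 hr0)] at hkilled
  rw [generator_const_mul, eulerStep, integral_const_mul, ← eulerStep] at hfree
  calc _ ≤ C * (h * √h) + C * (h * √h) := by
        refine (norm_sub_le_norm_sub_add_norm_sub _ _ _).trans (add_le_add hkilled ?_)
        rwa [norm_sub_rev]
    _ ≤ (11 + 2 * C) * (h * √h) := by nlinarith [mul_nonneg hh0 (Real.sqrt_nonneg h)]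

theorem exists_norm_iterate_eulerStep_killedExp_mul_sub_le :
    ∃ C, 0 ≤ C ∧ ∀ (q : ℂ → ℂ) (h : NNReal) (n : ℕ) (r : ℝ), IsSchur q → h ≤ 1 →
      ‖(eulerStep (-1) h)^[n] (fun z => killedExp z * q z) r
        - killedExp r * (eulerStep 1 h)^[n] q r‖ ≤ n * (C * (h * √h)) := by
  obtain ⟨C, hC0, hC⟩ := exists_norm_eulerStep_killedExp_mul_sub_le
  refine ⟨C, hC0, fun q h n r hq hh => ?_⟩
  induction n generalizing r with
  | zero => simp
  | succ n ih =>
    have hprod := isSchur_killedExp.mul hq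
    have hfree := hq.iterate_eulerStep_one h n
    have hkilled : Measurable ((eulerStep (-1) h)^[n] fun z => killedExp z * q z) ∧
        ∀ ζ, ‖(eulerStep (-1) h)^[n] (fun z => killedExp z * q z) ζ‖ ≤ 1 :=
      Function.Iterate.rec (fun p => Measurable p ∧ ∀ ζ, ‖p ζ‖ ≤ 1)
        ⟨hprod.measurable, hprod.norm_le_one⟩
        (fun p hp => ⟨measurable_eulerStep hp.1, norm_eulerStep_le hp.2⟩) n
    rw [Function.iterate_succ_apply', Function.iterate_succ_apply']
    calc _ ≤ n * (C * (h * √h)) + C * (h * √h) :=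
          (norm_sub_le_norm_sub_add_norm_sub _ _ _).trans (add_le_add
            (norm_eulerStep_sub_le hkilled.1 hkilled.2 (isSchur_killedExp.mul hfree).measurable
              (isSchur_killedExp.mul hfree).norm_le_one ih r)
            (hC _ h r hfree hh))
      _ = (n + 1 : ℕ) * (C * (h * √h)) := by
          push_cast
          ring

end Intertwining

section MarkovChain

variable {Ω S T E : Type*} [MeasurableSpace S] [MeasurableSpace T]
  {D : ℕ → Ω → S} {φ : T × S → T} {X : ℕ → Ω → T} {x : T}

theorem measurable_iSup_comap_of_recursion (hφ : Measurable φ) (hX0 : ∀ ω, X 0 ω = x)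
    (hX : ∀ n ω, X (n + 1) ω = φ (X n ω, D n ω)) (n : ℕ) :
    Measurable[⨆ k ∈ Iio n, MeasurableSpace.comap (D k) inferInstance] (X n) := by
  induction n with
  | zero =>
    rw [show X 0 = fun _ => x from funext hX0]
    exact measurable_const
  | succ n ih =>
    rw [show X (n + 1) = fun ω => φ (X n ω, D n ω) from funext (hX n)]
    refine hφ.comp (Measurable.prodMk (ih.mono (biSup_mono fun k hk => ?_) le_rfl)
      ((comap_measurable (D n)).mono (le_iSup₂_of_le n (mem_Iio.2 n.lt_succ_self) le_rfl) le_rfl))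
    exact (mem_Iio.1 hk).trans n.lt_succ_self

variable [MeasurableSpace Ω] {P : Measure Ω}

theorem indepFun_of_recursion (hφ : Measurable φ) (hD : ∀ n, Measurable (D n))
    (hindep : iIndepFun D P) (hX0 : ∀ ω, X 0 ω = x)
    (hX : ∀ n ω, X (n + 1) ω = φ (X n ω, D n ω)) (n : ℕ) : IndepFun (X n) (D n) P := by
  have hdisj : Disjoint (Iio n) {n} := disjoint_singleton_right.2 self_notMem_Iio
  have := indep_iSup_of_disjoint (fun k => (hD k).comap_le) hindep hdisj
  rw [iSup_singleton] at this
  exact indep_of_indep_of_le_left this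
    (measurable_iSup_comap_of_recursion hφ hX0 hX n).comap_le

theorem measurable_of_recursion (hφ : Measurable φ) (hD : ∀ n, Measurable (D n))
    (hX0 : ∀ ω, X 0 ω = x) (hX : ∀ n ω, X (n + 1) ω = φ (X n ω, D n ω)) (n : ℕ) :
    Measurable (X n) :=
  (measurable_iSup_comap_of_recursion hφ hX0 hX n).mono
    (iSup₂_le fun k _ => (hD k).comap_le) le_rfl

variable [NormedAddCommGroup E] [NormedSpace ℝ E] {ν : Measure S}

theorem integral_comp_eq_integral_integral_of_indepFun [IsProbabilityMeasure P] {Y : Ω → T}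
    {Z : Ω → S} (hY : Measurable Y) (hZ : Measurable Z) (hYZ : IndepFun Y Z P) {f : T × S → E}
    (hf : StronglyMeasurable f) {L : ℝ} (hL : ∀ z, ‖f z‖ ≤ L) :
    ∫ ω, f (Y ω, Z ω) ∂P = ∫ ω, ∫ s, f (Y ω, s) ∂P.map Z ∂P := by
  have := Measure.isProbabilityMeasure_map (μ := P) hY.aemeasurable
  have := Measure.isProbabilityMeasure_map (μ := P) hZ.aemeasurable
  calc ∫ ω, f (Y ω, Z ω) ∂P = ∫ z, f z ∂P.map fun ω => (Y ω, Z ω) :=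
        (integral_map (hY.prodMk hZ).aemeasurable hf.aestronglyMeasurable).symm
    _ = ∫ y, ∫ s, f (y, s) ∂P.map Z ∂P.map Y := by
        rw [(indepFun_iff_map_prod_eq_prod_map_map hY.aemeasurable hZ.aemeasurable).1 hYZ,
          integral_prod]
        exact .of_bound hf.aestronglyMeasurable L (.of_forall hL)
    _ = ∫ ω, ∫ s, f (Y ω, s) ∂P.map Z ∂P :=
        integral_map hY.aemeasurable hf.integral_prod_right'.aestronglyMeasurable

theorem integral_comp_recursion_eq_iterate [CompleteSpace E] [IsProbabilityMeasure P]
    (hφ : Measurable φ) (hD : ∀ n, Measurable (D n)) (hindep : iIndepFun D P)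
    (hlaw : ∀ n, P.map (D n) = ν) (hX0 : ∀ ω, X 0 ω = x)
    (hX : ∀ n ω, X (n + 1) ω = φ (X n ω, D n ω)) (n : ℕ) {q : T → E}
    (hq : StronglyMeasurable q) {L : ℝ} (hL : ∀ z, ‖q z‖ ≤ L) :
    ∫ ω, q (X n ω) ∂P = (fun (p : T → E) y => ∫ s, p (φ (y, s)) ∂ν)^[n] q x := by
  have hν : IsProbabilityMeasure ν :=
    hlaw 0 ▸ Measure.isProbabilityMeasure_map (hD 0).aemeasurable
  induction n generalizing q with
  | zero => simp [hX0]
  | succ n ih =>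
    rw [Function.iterate_succ_apply, ← ih]
    · simp only [hX, ← hlaw n]
      exact integral_comp_eq_integral_integral_of_indepFun (measurable_of_recursion hφ hD hX0 hX n)
        (hD n) (indepFun_of_recursion hφ hD hindep hX0 hX n) (hq.comp_measurable hφ)
        fun z => hL (φ z)
    · exact (hq.comp_measurable hφ).integral_prod_right'
    · exact fun z =>
        (norm_integral_le_of_norm_le_const (.of_forall fun _ => hL _)).trans_eq (by simp)

end MarkovChain

section RiemannSum

theorem abs_mul_sub_integral_le {f : ℝ → ℝ} {a h ε : ℝ} (hh : 0 ≤ h)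
    (hf : IntervalIntegrable f volume a (a + h)) (hε : ∀ s ∈ Icc a (a + h), |f a - f s| ≤ ε) :
    |h * f a - ∫ s in a..(a + h), f s| ≤ ε * h := by
  have hint : h * f a - ∫ s in a..(a + h), f s = ∫ s in a..(a + h), (f a - f s) := by
    rw [intervalIntegral.integral_sub intervalIntegrable_const hf, intervalIntegral.integral_const,
      add_sub_cancel_left, smul_eq_mul]
  have hbound := intervalIntegral.norm_integral_le_of_norm_le_const (a := a) (b := a + h)
    (f := fun s => f a - f s) (C := ε) fun s hs => by
      rw [uIoc_of_le (by linarith)] at hs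
      exact hε s (Ioc_subset_Icc_self hs)
  rwa [add_sub_cancel_left, abs_of_nonneg hh, ← hint] at hbound

theorem abs_riemannSum_sub_integral_le {f : ℝ → ℝ} {t δ ε : ℝ} (ht : 0 ≤ t)
    (hf : ContinuousOn f (Icc 0 t))
    (hε : ∀ s ∈ Icc 0 t, ∀ s' ∈ Icc 0 t, dist s s' < δ → dist (f s) (f s') < ε)
    {n : ℕ} (hn : n ≠ 0) (hδ : t / n < δ) :
    |t / n * ∑ k ∈ Finset.range n, f (k * (t / n)) - ∫ s in (0 : ℝ)..t, f s| ≤ ε * t := by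
  have : (0 : ℝ) < n := by positivity
  set h := t / n with hh
  have hh0 : 0 ≤ h := by positivity
  have hnh : n * h = t := by rw [hh]; field_simp
  have hcell {k : ℕ} (hk : k < n) : Icc (k * h) (k * h + h) ⊆ Icc 0 t := by
    have : ((k : ℝ) + 1) * h ≤ n * h := by gcongr; exact_mod_cast hk
    exact Icc_subset_Icc (by positivity) (by linarith)
  have hsum : ∑ k ∈ Finset.range n, ∫ s in (k * h)..(k * h + h), f s = ∫ s in (0 : ℝ)..t, f s := by
    have := intervalIntegral.sum_integral_adjacent_intervals (f := f) (μ := volume)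
      (a := fun k : ℕ => k * h) (n := n) fun _ hk => by
        have := hcell hk
        push_cast
        rw [add_one_mul]
        exact (hf.mono this).intervalIntegrable_of_Icc (by linarith)
    simpa [add_one_mul, hnh] using this
  rw [← hsum, Finset.mul_sum, ← Finset.sum_sub_distrib]
  calc _ ≤ ∑ _ ∈ Finset.range n, ε * h := by
        refine (Finset.abs_sum_le_sum_abs _ _).trans (Finset.sum_le_sum fun _ hk => ?_)
        have hsub := hcell (Finset.mem_range.1 hk)
        refine abs_mul_sub_integral_le hh0
          ((hf.mono hsub).intervalIntegrable_of_Icc (by linarith)) fun s hs => ?_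
        refine (hε _ (hsub (left_mem_Icc.2 (by linarith))) s (hsub hs) ?_).le
        rw [dist_comm, Real.dist_eq, abs_of_nonneg (sub_nonneg.2 hs.1)]
        linarith [hs.2]
    _ = ε * t := by
        rw [Finset.sum_const, Finset.card_range, nsmul_eq_mul, ← hnh]
        ring

theorem tendsto_riemannSum {f : ℝ → ℝ} {t : ℝ} (ht : 0 ≤ t) (hf : ContinuousOn f (Icc 0 t)) :
    Filter.Tendsto (fun n : ℕ => t / n * ∑ k ∈ Finset.range n, f (k * (t / n))) Filter.atTop
      (nhds (∫ s in (0 : ℝ)..t, f s)) := by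
  rw [Metric.tendsto_nhds]
  intro ε hε
  obtain ⟨δ, hδ, hfδ⟩ := Metric.uniformContinuousOn_iff.1
    (isCompact_Icc.uniformContinuousOn_of_continuous hf) (ε / (t + 1)) (by positivity)
  filter_upwards [(tendsto_const_div_atTop_nhds_zero_nat t).eventually_lt_const hδ,
    Filter.eventually_ne_atTop 0] with n hnδ hn
  refine (abs_riemannSum_sub_integral_le ht hf hfδ hn hnδ).trans_lt ?_
  rw [div_mul_eq_mul_div, div_lt_iff₀ (by positivity)]
  nlinarith

end RiemannSum

section Paths

variable {Ω : Type*} {B : ℝ → Ω → ℝ} {t : ℝ} {ω : Ω}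

theorem M_pos : 0 < M B t ω := Real.exp_pos _

theorem A_eq_integral_M : A B t ω = ∫ s in (0 : ℝ)..t, M B s ω := rfl

theorem A_nonneg (ht : 0 ≤ t) : 0 ≤ A B t ω :=
  intervalIntegral.integral_nonneg ht fun _ _ => M_pos.le

/-- The Euler scheme with step `h`, started at `u`, for the diffusion `t ↦ (u + σ A_t) / M_t`. -/
def eulerScheme (B : ℝ → Ω → ℝ) (σ : ℝ) (h : NNReal) (u : ℝ) (n : ℕ) (ω : Ω) : ℝ :=
  (u + σ * (h * ∑ k ∈ Finset.range n, M B (k * h) ω)) / M B (n * h) ω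

theorem eulerScheme_succ (B : ℝ → Ω → ℝ) (σ : ℝ) (h : NNReal) (u : ℝ) (n : ℕ) (ω : Ω) :
    eulerScheme B σ h u (n + 1) ω = (eulerScheme B σ h u n ω + σ * h) /
      Real.exp (B (n * h + h) ω - B (n * h) ω - h / 2) := by
  have hM : M B ((n + 1 : ℕ) * h) ω =
      M B (n * h) ω * Real.exp (B (n * h + h) ω - B (n * h) ω - h / 2) := by
    rw [M, M, ← Real.exp_add]
    push_cast
    ring_nf
  have hpos : M B (n * h) ω ≠ 0 := M_pos.ne'
  rw [eulerScheme, eulerScheme, hM, Finset.sum_range_succ, ← div_div, div_add' _ _ _ hpos]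
  congr 2
  ring

end Paths

section ExponentialFunctional

variable {P B} {t : ℝ}

theorem IsBrownianMotion.continuous_M (hB : IsBrownianMotion P B) (ω : Ω) :
    Continuous fun s => M B s ω :=
  Real.continuous_exp.comp ((hB.continuous_paths ω).sub (continuous_id.div_const 2))

theorem IsBrownianMotion.measurable_M (hB : IsBrownianMotion P B) (t : ℝ) : Measurable (M B t) :=
  Real.measurable_exp.comp ((hB.measurable t).sub_const _)

theorem IsBrownianMotion.stronglyMeasurable_uncurry_M (hB : IsBrownianMotion P B) :
    StronglyMeasurable fun x : Ω × ℝ => M B x.2 x.1 :=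
  ((measurable_uncurry_of_continuous_of_measurable hB.continuous_M hB.measurable_M).comp
    measurable_swap).stronglyMeasurable

theorem IsBrownianMotion.measurable_A (hB : IsBrownianMotion P B) (t : ℝ) : Measurable (A B t) := by
  have hM := hB.stronglyMeasurable_uncurry_M
  exact (hM.integral_prod_right'.sub hM.integral_prod_right').measurable

theorem IsBrownianMotion.map_sub_sub (hB : IsBrownianMotion P B) {s : ℝ} (hs : 0 ≤ s)
    (h : NNReal) (c : ℝ) :
    P.map (fun ω => B (s + h) ω - B s ω - c) = gaussianReal (-c) h := by
  have hlaw := hB.gaussian_increments s (s + h) hs (by simp)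
  have hmeas : Measurable fun ω => B (s + h) ω - B s ω := (hB.measurable _).sub (hB.measurable _)
  rw [add_sub_cancel_left, Real.toNNReal_coe] at hlaw
  rw [← zero_sub c, ← gaussianReal_map_sub_const c, ← hlaw,
    Measure.map_map (by fun_prop) hmeas, Function.comp_def]

theorem IsBrownianMotion.integrable_M_and_integral_M (hB : IsBrownianMotion P B) (ht : 0 ≤ t) :
    Integrable (M B t) P ∧ ∫ ω, M B t ω ∂P = 1 := by
  lift t to NNReal using ht
  have hlaw : P.map (fun ω => B t ω - t / 2) = gaussianReal (-(t / 2)) t := by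
    simpa [hB.start] using hB.map_sub_sub le_rfl t (t / 2)
  have hmgf := mgf_gaussianReal hlaw 1
  norm_num [mgf] at hmgf
  exact ⟨.of_integral_ne_zero (hmgf.trans_ne one_ne_zero), hmgf⟩

theorem IsBrownianMotion.integrable_A (hB : IsBrownianMotion P B) (ht : 0 ≤ t) :
    Integrable (A B t) P := by
  have := hB.isProbabilityMeasure
  have hprod : Integrable (fun x : Ω × ℝ => M B x.2 x.1) (P.prod (volume.restrict (Ioc 0 t))) := by
    rw [integrable_prod_iff' hB.stronglyMeasurable_uncurry_M.aestronglyMeasurable]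
    have hpos : ∀ᵐ s ∂volume.restrict (Ioc 0 t), 0 < s :=
      (ae_restrict_mem measurableSet_Ioc).mono fun s hs => hs.1
    refine ⟨hpos.mono fun s hs => (hB.integrable_M_and_integral_M hs.le).1,
      (integrable_const 1).congr (hpos.mono fun s hs => ?_)⟩
    simp only [Real.norm_of_nonneg M_pos.le, (hB.integrable_M_and_integral_M hs.le).2]
  refine hprod.integral_prod_left.congr (.of_forall fun ω => ?_)
  rw [A_eq_integral_M, intervalIntegral.integral_of_le ht]

theorem IsBrownianMotion.eulerScheme_zero (hB : IsBrownianMotion P B) (σ : ℝ) (h : NNReal) (u : ℝ)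
    (ω : Ω) : eulerScheme B σ h u 0 ω = u := by
  simp [eulerScheme, M, hB.start]

theorem IsBrownianMotion.integral_comp_eulerScheme (hB : IsBrownianMotion P B) (σ : ℝ)
    (h : NNReal) (u : ℝ) (n : ℕ) {q : ℂ → ℂ} (hq : Measurable q) {L : ℝ} (hL : ∀ ζ, ‖q ζ‖ ≤ L) :
    ∫ ω, q (eulerScheme B σ h u n ω) ∂P = (eulerStep σ h)^[n] q u := by
  have := hB.isProbabilityMeasure
  have hindep : iIndepFun (fun (k : ℕ) ω => B (k * h + h) ω - B (k * h) ω - h / 2) P := by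
    have hmono : Monotone fun k : ℕ => k * (h : ℝ) := fun j k hjk => by dsimp only; gcongr
    simpa [Function.comp_def, add_one_mul] using
      (hB.indep_increments (fun k => k * h) hmono (by simp)).comp
        (fun _ x => x - h / 2) fun _ => measurable_id.sub_const _
  exact integral_comp_recursion_eq_iterate (X := fun n ω => (eulerScheme B σ h u n ω : ℂ))
    (φ := fun x : ℂ × ℝ => (x.1 + σ * h) / Real.exp x.2) (by fun_prop)
    (fun k => by have := hB.measurable; fun_prop) hindep
    (fun k => hB.map_sub_sub (by positivity) h _)
    (fun ω => by rw [hB.eulerScheme_zero])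
    (fun k ω => by rw [eulerScheme_succ]; simp) n hq.stronglyMeasurable hL

theorem IsBrownianMotion.measurable_eulerScheme (hB : IsBrownianMotion P B) (σ : ℝ) (h : NNReal)
    (u : ℝ) (n : ℕ) : Measurable (eulerScheme B σ h u n) := by
  have := hB.measurable_M
  unfold eulerScheme
  fun_prop

theorem IsBrownianMotion.tendsto_eulerScheme (hB : IsBrownianMotion P B) (σ : ℝ) (t : NNReal)
    (u : ℝ) (ω : Ω) :
    Filter.Tendsto (fun n : ℕ => eulerScheme B σ (t / n) u n ω) Filter.atTop
      (nhds ((u + σ * A B t ω) / M B t ω)) := by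
  have hsum := tendsto_riemannSum t.coe_nonneg (hB.continuous_M ω).continuousOn
  refine (((hsum.const_mul σ).const_add u).div_const (M B t ω)).congr' ?_
  filter_upwards [Filter.eventually_ne_atTop 0] with n hn
  rw [eulerScheme]
  push_cast
  rw [mul_div_cancel₀ (t : ℝ) (Nat.cast_ne_zero.2 hn)]

theorem IsBrownianMotion.tendsto_iterate_eulerStep (hB : IsBrownianMotion P B) (σ : ℝ) (t : NNReal)
    (u : ℝ) {q : ℂ → ℂ} (hq : Measurable q) (hcont : Continuous fun r : ℝ => q r) {L : ℝ}
    (hL : ∀ ζ, ‖q ζ‖ ≤ L) :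
    Filter.Tendsto (fun n : ℕ => (eulerStep σ (t / n))^[n] q u) Filter.atTop
      (nhds (∫ ω, q (((u + σ * A B t ω) / M B t ω : ℝ)) ∂P)) := by
  have := hB.isProbabilityMeasure
  simp only [← hB.integral_comp_eulerScheme σ _ u _ hq hL]
  refine tendsto_integral_of_dominated_convergence (fun _ => L) (fun n => ?_) (integrable_const L)
    (fun n => .of_forall fun ω => hL _) (.of_forall fun ω => ?_)
  · exact (hcont.measurable.comp (hB.measurable_eulerScheme σ _ u n)).aestronglyMeasurable
  · exact (hcont.tendsto _).comp (hB.tendsto_eulerScheme σ t u ω)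

end ExponentialFunctional

section HarmonicTransform

variable {P B}

theorem continuous_expNegInvGlue : Continuous expNegInvGlue :=
  (expNegInvGlue.contDiff (n := 0)).continuous

theorem continuous_killedExp_ofReal : Continuous fun r : ℝ => killedExp r := by
  simp only [killedExp_ofReal]
  exact Complex.continuous_ofReal.comp (continuous_expNegInvGlue.comp (continuous_id.div_const 2))

theorem IsSchur.tendsto_iterate_eulerStep_killedExp_mul_sub {q : ℂ → ℂ} (hq : IsSchur q)
    (t : NNReal) (u : ℝ) :
    Filter.Tendsto (fun n : ℕ => (eulerStep (-1) (t / n))^[n] (fun z => killedExp z * q z) u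
      - killedExp u * (eulerStep 1 (t / n))^[n] q u) Filter.atTop (nhds 0) := by
  obtain ⟨C, -, hC⟩ := exists_norm_iterate_eulerStep_killedExp_mul_sub_le
  have hdiv := tendsto_const_div_atTop_nhds_zero_nat (t : ℝ)
  have herr : Filter.Tendsto (fun n : ℕ => C * t * √(t / n)) Filter.atTop (nhds 0) := by
    simpa using hdiv.sqrt.const_mul (C * t)
  refine squeeze_zero_norm' ?_ herr
  filter_upwards [hdiv.eventually_le_const one_pos, Filter.eventually_ne_atTop 0] with n hn1 hn0
  have hstep := hC q (t / n) n u hq (by exact_mod_cast hn1)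
  refine hstep.trans_eq ?_
  push_cast
  field_simp

theorem IsBrownianMotion.killedExp_mul_integral (hB : IsBrownianMotion P B) (t : NNReal) (u : ℝ)
    {q : ℂ → ℂ} (hq : IsSchur q) (hcont : Continuous fun r : ℝ => q r) :
    killedExp u * ∫ ω, q (((u + 1 * A B t ω) / M B t ω : ℝ)) ∂P =
      ∫ ω, killedExp (((u + -1 * A B t ω) / M B t ω : ℝ)) *
        q (((u + -1 * A B t ω) / M B t ω : ℝ)) ∂P := by
  have hprod := isSchur_killedExp.mul hq
  have hkilled := hB.tendsto_iterate_eulerStep (-1) t u hprod.measurable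
    (continuous_killedExp_ofReal.mul hcont) hprod.norm_le_one
  have hfree := hB.tendsto_iterate_eulerStep 1 t u hq.measurable hcont hq.norm_le_one
  exact (sub_eq_zero.1 (tendsto_nhds_unique (hkilled.sub (hfree.const_mul _))
    (hq.tendsto_iterate_eulerStep_killedExp_mul_sub t u))).symm

theorem IsBrownianMotion.expNegInvGlue_mul_integral_pow (hB : IsBrownianMotion P B) {t : ℝ}
    (ht : 0 ≤ t) (u : ℝ) (n : ℕ) :
    expNegInvGlue (u / 2) * ∫ ω, expNegInvGlue ((u + A B t ω) / M B t ω / 2) ^ n ∂P =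
      ∫ ω, expNegInvGlue ((u - A B t ω) / M B t ω / 2) ^ (n + 1) ∂P := by
  lift t to NNReal using ht
  have := hB.killedExp_mul_integral t u (isSchur_killedExp.pow n)
    (continuous_killedExp_ofReal.pow n)
  simp only [killedExp_ofReal, one_mul, neg_one_mul, ← sub_eq_add_neg, ← pow_succ'] at this
  exact_mod_cast this

end HarmonicTransform

section MomentProblem

theorem integrable_of_continuous_of_ae_mem_Icc {μ : Measure ℝ} [IsFiniteMeasure μ] {a b : ℝ}
    (hμ : ∀ᵐ x ∂μ, x ∈ Icc a b) {f : ℝ → ℝ} (hf : Continuous f) : Integrable f μ := by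
  obtain ⟨C, hC⟩ := isCompact_Icc.exists_bound_of_continuousOn (s := Icc a b) hf.continuousOn
  exact .of_bound hf.aestronglyMeasurable C (hμ.mono hC)

theorem integral_polynomial_eval_eq_sum {μ : Measure ℝ} [IsFiniteMeasure μ] {a b : ℝ}
    (hμ : ∀ᵐ x ∂μ, x ∈ Icc a b) (p : Polynomial ℝ) :
    ∫ x, p.eval x ∂μ = ∑ i ∈ Finset.range (p.natDegree + 1), p.coeff i * ∫ x, x ^ i ∂μ := by
  simp only [Polynomial.eval_eq_sum_range]
  rw [integral_finsetSum _ fun i _ =>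
    integrable_of_continuous_of_ae_mem_Icc hμ ((continuous_pow i).const_mul (p.coeff i))]
  simp only [integral_const_mul]

theorem abs_integral_sub_le_of_ae_mem {μ : Measure ℝ} [IsFiniteMeasure μ] {a b ε : ℝ}
    (hμ : ∀ᵐ x ∂μ, x ∈ Icc a b) {f g : ℝ → ℝ} (hf : Continuous f) (hg : Continuous g)
    (hfg : ∀ x ∈ Icc a b, |f x - g x| ≤ ε) :
    |∫ x, f x ∂μ - ∫ x, g x ∂μ| ≤ ε * μ.real univ := by
  rw [← integral_sub (integrable_of_continuous_of_ae_mem_Icc hμ hf)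
    (integrable_of_continuous_of_ae_mem_Icc hμ hg)]
  exact norm_integral_le_of_norm_le_const (f := fun x => f x - g x) (hμ.mono hfg)

theorem measure_eq_of_integral_pow_eq {μ ν : Measure ℝ} [IsFiniteMeasure μ] [IsFiniteMeasure ν]
    {a b : ℝ} (hμ : ∀ᵐ x ∂μ, x ∈ Icc a b) (hν : ∀ᵐ x ∂ν, x ∈ Icc a b)
    (h : ∀ n : ℕ, ∫ x, x ^ n ∂μ = ∫ x, x ^ n ∂ν) : μ = ν := by
  refine ext_of_forall_integral_eq_of_IsFiniteMeasure fun f => eq_of_abs_sub_le_all fun ε hε => ?_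
  set m := μ.real univ + ν.real univ + 1
  have hm0 : 0 < m := by positivity
  obtain ⟨p, hp⟩ := exists_polynomial_near_of_continuousOn a b f f.continuous.continuousOn (ε / m)
    (by positivity)
  have hpoly : ∫ x, p.eval x ∂μ = ∫ x, p.eval x ∂ν := by
    simp only [integral_polynomial_eval_eq_sum hμ, integral_polynomial_eval_eq_sum hν, h]
  have hμp := abs_integral_sub_le_of_ae_mem hμ p.continuous f.continuous fun x hx => (hp x hx).le
  have hνp := abs_integral_sub_le_of_ae_mem hν p.continuous f.continuous fun x hx => (hp x hx).le
  calc |∫ x, f x ∂μ - ∫ x, f x ∂ν| ≤ ε / m * μ.real univ + ε / m * ν.real univ := by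
        rw [abs_sub_comm, hpoly] at hμp
        exact (abs_sub_le _ _ _).trans (add_le_add hμp hνp)
    _ ≤ ε / m * m := by
        rw [← mul_add]
        gcongr
        exact (lt_add_one _).le
    _ = ε := div_mul_cancel₀ ε hm0.ne'

variable {P} {W V : Ω → ℝ} {b c : ℝ}

theorem smul_map_eq_withDensity_map_of_integral_pow_eq [IsFiniteMeasure P] (hW : Measurable W)
    (hV : Measurable V) (hWb : ∀ ω, W ω ∈ Icc 0 b) (hVb : ∀ ω, V ω ∈ Icc 0 b) (hc : 0 ≤ c)
    (h : ∀ n : ℕ, c * ∫ ω, W ω ^ n ∂P = ∫ ω, V ω ^ (n + 1) ∂P) :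
    ENNReal.ofReal c • P.map W = (P.map V).withDensity fun v => ENNReal.ofReal v := by
  have hmem {Y : Ω → ℝ} (hY : Measurable Y) (hYb : ∀ ω, Y ω ∈ Icc 0 b) :
      ∀ᵐ y ∂P.map Y, y ∈ Icc 0 b :=
    (ae_map_iff hY.aemeasurable measurableSet_Icc).2 (.of_forall hYb)
  have : IsFiniteMeasure ((P.map V).withDensity fun v => ENNReal.ofReal v) :=
    isFiniteMeasure_withDensity_ofReal
      (integrable_of_continuous_of_ae_mem_Icc (hmem hV hVb) continuous_id).2
  have : IsFiniteMeasure (ENNReal.ofReal c • P.map W) := (P.map W).smul_finite ENNReal.ofReal_ne_top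
  refine measure_eq_of_integral_pow_eq (Measure.smul_absolutelyContinuous.ae_le (hmem hW hWb))
    ((withDensity_absolutelyContinuous _ _).ae_le (hmem hV hVb)) fun n => ?_
  calc _ = c * ∫ ω, W ω ^ n ∂P := by
        rw [integral_smul_measure, ENNReal.toReal_ofReal hc, smul_eq_mul,
          integral_map hW.aemeasurable (by fun_prop)]
    _ = ∫ ω, (ENNReal.ofReal (V ω)).toReal • V ω ^ n ∂P := by
        simp only [h, ENNReal.toReal_ofReal (hVb _).1, smul_eq_mul, pow_succ']
    _ = _ := by
        rw [integral_withDensity_eq_integral_toReal_smul ENNReal.measurable_ofReal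
          (.of_forall fun _ => ENNReal.ofReal_lt_top), integral_map hV.aemeasurable (by fun_prop)]

theorem mul_lintegral_inv_of_smul_map_eq (hW : Measurable W) (hV : Measurable V)
    (h : ENNReal.ofReal c • P.map W = (P.map V).withDensity fun v => ENNReal.ofReal v) :
    ENNReal.ofReal c * ∫⁻ ω, ENNReal.ofReal (W ω)⁻¹ ∂P = P {ω | 0 < V ω} := by
  have hinv : Measurable fun x : ℝ => ENNReal.ofReal x⁻¹ := by fun_prop
  have hcancel (v : ℝ) : ENNReal.ofReal v * ENNReal.ofReal v⁻¹ = (Ioi 0).indicator 1 v := by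
    rcases le_or_gt v 0 with hv | hv
    · rw [ENNReal.ofReal_of_nonpos hv, zero_mul, indicator_of_notMem (notMem_Ioi.2 hv)]
    · rw [← ENNReal.ofReal_mul hv.le, mul_inv_cancel₀ hv.ne', ENNReal.ofReal_one,
        indicator_of_mem (mem_Ioi.2 hv), Pi.one_apply]
  calc _ = ∫⁻ w, ENNReal.ofReal w⁻¹ ∂(ENNReal.ofReal c • P.map W) := by
        rw [lintegral_smul_measure, lintegral_map hinv hW, smul_eq_mul]
    _ = ∫⁻ v, (Ioi 0).indicator 1 v ∂P.map V := by
        rw [h, lintegral_withDensity_eq_lintegral_mul _ ENNReal.measurable_ofReal hinv]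
        simp only [Pi.mul_apply, hcancel]
    _ = P {ω | 0 < V ω} := by
        rw [lintegral_indicator_one measurableSet_Ioi, Measure.map_apply hV measurableSet_Ioi]
        rfl

theorem integrable_inv_and_mul_integral_inv [IsFiniteMeasure P] (hW : Measurable W)
    (hV : Measurable V) (hWb : ∀ ω, W ω ∈ Icc 0 b) (hVb : ∀ ω, V ω ∈ Icc 0 b) (hc : 0 < c)
    (h : ∀ n : ℕ, c * ∫ ω, W ω ^ n ∂P = ∫ ω, V ω ^ (n + 1) ∂P) :
    Integrable (fun ω => (W ω)⁻¹) P ∧ c * ∫ ω, (W ω)⁻¹ ∂P = P.real {ω | 0 < V ω} := by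
  have hlint := mul_lintegral_inv_of_smul_map_eq hW hV
    (smul_map_eq_withDensity_map_of_integral_pow_eq hW hV hWb hVb hc.le h)
  have hnonneg : 0 ≤ᵐ[P] fun ω => (W ω)⁻¹ := .of_forall fun ω => inv_nonneg.2 (hWb ω).1
  refine ⟨⟨hW.inv.aestronglyMeasurable, ?_⟩, ?_⟩
  · rw [hasFiniteIntegral_iff_ofReal hnonneg]
    exact ENNReal.lt_top_of_mul_ne_top_right (hlint.trans_ne (measure_ne_top P _))
      (ENNReal.ofReal_pos.2 hc).ne'
  · rw [integral_eq_lintegral_of_nonneg_ae hnonneg hW.inv.aestronglyMeasurable, measureReal_def,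
      ← hlint, ENNReal.toReal_mul, ENNReal.toReal_ofReal hc.le]

end MomentProblem

section Differentiation

variable {P} {X Y : Ω → ℝ} {a b u : ℝ}

theorem norm_cexp_ofReal_div_add_le {x y : ℝ} (hx : 0 ≤ x) (hy : 0 ≤ y) (hb : 0 < b) {ζ : ℂ}
    (hζ : b ≤ ζ.re) : ‖Complex.exp (x / (ζ + y))‖ ≤ Real.exp (x / (b + y)) := by
  have hre : (ζ + y).re = ζ.re + y := by simp
  have hby : 0 < b + y := by positivity
  have hle : b + y ≤ (ζ + y).re := by rw [hre]; gcongr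
  have hpos : 0 < (ζ + y).re := hby.trans_le hle
  rw [Complex.norm_exp, Real.exp_le_exp, div_eq_mul_inv, div_eq_mul_inv, Complex.re_ofReal_mul,
    Complex.inv_re]
  gcongr
  calc (ζ + y).re / Complex.normSq (ζ + y) ≤ (ζ + y).re / (ζ + y).re ^ 2 := by
        gcongr
        exact (sq _).trans_le (Complex.re_sq_le_normSq _)
    _ = ((ζ + y).re)⁻¹ := by field_simp
    _ ≤ (b + y)⁻¹ := by gcongr

theorem hasDerivAt_cexp_div_add (x y : ℂ) {ζ : ℂ} (hζ : ζ + y ≠ 0) :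
    HasDerivAt (fun ζ => Complex.exp (x / (ζ + y)))
      (-(x / (ζ + y) ^ 2 * Complex.exp (x / (ζ + y)))) ζ := by
  refine (((hasDerivAt_const ζ x).fun_div ((hasDerivAt_id' ζ).add_const y) hζ).cexp).congr_deriv ?_
  ring

theorem hasDerivAt_integral_exp_div_add (hX : Measurable X) (hY : Measurable Y)
    (hX0 : ∀ ω, 0 ≤ X ω) (hY0 : ∀ ω, 0 ≤ Y ω) (hb : 0 < b) (hba : b < a)
    (hint : Integrable (fun ω => Real.exp (X ω / (b + Y ω))) P) :
    HasDerivAt (fun u => ∫ ω, Real.exp (X ω / (u + Y ω)) ∂P)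
      (-∫ ω, X ω / (a + Y ω) ^ 2 * Real.exp (X ω / (a + Y ω)) ∂P) a := by
  have hne (ω : Ω) {ζ : ℂ} (hζ : b < ζ.re) : ζ + Y ω ≠ 0 := fun h => by
    have := congr_arg Complex.re h
    simp only [Complex.add_re, Complex.ofReal_re, Complex.zero_re] at this
    linarith [hY0 ω]
  have hcomplex := hasDerivAt_integral_of_norm_le (μ := P) (z := (a : ℂ)) (U := {ζ | b < ζ.re})
    (F := fun ζ ω => Complex.exp (X ω / (ζ + Y ω)))
    (isOpen_lt continuous_const Complex.continuous_re)
    (fun ζ _ => Measurable.aestronglyMeasurable (by fun_prop))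
    (fun ω ζ hζ => (hasDerivAt_cexp_div_add _ _ (hne ω hζ)).differentiableAt.differentiableWithinAt)
    (fun ω ζ hζ => norm_cexp_ofReal_div_add_le (hX0 ω) (hY0 ω) hb (le_of_lt hζ)) hint hba
  have hderiv (ω : Ω) : deriv (fun ζ : ℂ => Complex.exp (X ω / (ζ + Y ω))) a =
      ((-(X ω / (a + Y ω) ^ 2 * Real.exp (X ω / (a + Y ω))) : ℝ) : ℂ) := by
    rw [(hasDerivAt_cexp_div_add _ _ (hne ω (ζ := a) hba)).deriv]
    push_cast
    rfl
  have hreal := hcomplex.real_of_complex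
  simp only [hderiv] at hreal
  norm_cast at hreal
  simpa only [integral_complex_ofReal, Complex.ofReal_re, integral_neg] using hreal

theorem measure_eq_zero_of_continuousAt [IsFiniteMeasure P] (hY : Measurable Y)
    (hcont : ContinuousAt (fun u => P.real {ω | Y ω < u}) u) : P {ω | Y ω = u} = 0 := by
  have hle : ∀ v > u, P.real {ω | Y ω < u} + P.real {ω | Y ω = u} ≤ P.real {ω | Y ω < v} := by
    intro v hv
    rw [← measureReal_union (disjoint_left.2 fun ω hlt heq => hlt.ne heq)
      (measurableSet_eq_fun hY measurable_const)]
    exact measureReal_mono (union_subset (fun ω hω => hω.trans hv) fun ω hω => hω.trans_lt hv)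
  have hlim := ge_of_tendsto (hcont.tendsto.mono_left (nhdsWithin_le_nhds (s := Ioi u)))
    (Filter.eventually_of_mem self_mem_nhdsWithin hle)
  exact (measureReal_eq_zero_iff).1 (le_antisymm (by linarith) measureReal_nonneg)

theorem hasDerivAt_max_sub_zero {y : ℝ} (h : y ≠ u) :
    HasDerivAt (fun u => max (y - u) 0) (-(Ici u).indicator 1 y) u := by
  rcases h.lt_or_gt with h | h
  · rw [indicator_of_notMem (notMem_Ici.2 h), neg_zero]
    refine (hasDerivAt_const u (0 : ℝ)).congr_of_eventuallyEq ?_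
    filter_upwards [eventually_gt_nhds h] with v hv
    exact max_eq_right (sub_nonpos.2 hv.le)
  · rw [indicator_of_mem (mem_Ici.2 h.le), Pi.one_apply]
    refine ((hasDerivAt_id' u).const_sub y).congr_of_eventuallyEq ?_
    filter_upwards [eventually_lt_nhds h] with v hv
    exact max_eq_left (sub_nonneg.2 hv.le)

theorem hasDerivAt_integral_max_sub_zero [IsFiniteMeasure P] (hY : Measurable Y)
    (hYint : Integrable Y P) (hYu : P {ω | Y ω = u} = 0) :
    HasDerivAt (fun u => ∫ ω, max (Y ω - u) 0 ∂P) (-P.real {ω | u ≤ Y ω}) u := by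
  have hlip (ω : Ω) : LipschitzOnWith (Real.nnabs 1) (fun u => max (Y ω - u) 0) univ :=
    LipschitzOnWith.of_dist_le_mul fun x _ y _ => by
      simp only [map_one, NNReal.coe_one, one_mul]
      refine (abs_max_sub_max_le_abs _ _ _).trans_eq ?_
      rw [sub_sub_sub_cancel_left, abs_sub_comm, Real.dist_eq]
  have hderiv := (hasDerivAt_integral_of_dominated_loc_of_lip (μ := P) (bound := fun _ => 1)
    (F := fun u ω => max (Y ω - u) 0) (F' := fun ω => -(Ici u).indicator 1 (Y ω)) Filter.univ_mem
    (.of_forall fun v => Measurable.aestronglyMeasurable (by fun_prop))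
    ((hYint.sub (integrable_const u)).pos_part)
    (((measurable_one.indicator measurableSet_Ici).comp hY).neg.aestronglyMeasurable)
    (.of_forall hlip) (integrable_const 1)
    ((measure_eq_zero_iff_ae_notMem.1 hYu).mono fun ω hω => hasDerivAt_max_sub_zero hω)).2
  refine hderiv.congr_deriv ?_
  rw [integral_neg, ← integral_indicator_one (measurableSet_le measurable_const hY)]
  rfl

end Differentiation

section DistributionFunction

variable {P B} {t u : ℝ}

theorem expNegInvGlue_mem_Icc (x : ℝ) : expNegInvGlue x ∈ Icc 0 1 := by
  refine ⟨expNegInvGlue.nonneg x, ?_⟩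
  rw [expNegInvGlue]
  split_ifs with hx
  · exact zero_le_one
  · exact Real.exp_le_one_iff.2 (neg_nonpos.2 (inv_nonneg.2 (le_of_not_ge hx)))

theorem expNegInvGlue_half {x : ℝ} (hx : 0 < x) : expNegInvGlue (x / 2) = Real.exp (-(2 / x)) := by
  rw [expNegInvGlue, if_neg (half_pos hx).not_ge, inv_div]

theorem IsBrownianMotion.integrable_exp_and_exp_mul_integral_exp (hB : IsBrownianMotion P B)
    (ht : 0 ≤ t) (hu : 0 < u) :
    Integrable (fun ω => Real.exp (2 * M B t ω / (u + A B t ω))) P ∧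
      Real.exp (-(2 / u)) * ∫ ω, Real.exp (2 * M B t ω / (u + A B t ω)) ∂P =
        P.real {ω | A B t ω < u} := by
  have := hB.isProbabilityMeasure
  have hA := hB.measurable_A t
  have hM := hB.measurable_M t
  have hg : Measurable expNegInvGlue := continuous_expNegInvGlue.measurable
  have hW (ω : Ω) : (expNegInvGlue ((u + A B t ω) / M B t ω / 2))⁻¹ =
      Real.exp (2 * M B t ω / (u + A B t ω)) := by
    rw [expNegInvGlue_half (div_pos (add_pos_of_pos_of_nonneg hu (A_nonneg ht)) M_pos),
      Real.exp_neg, inv_inv, div_div_eq_mul_div]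
  have hV (ω : Ω) : 0 < expNegInvGlue ((u - A B t ω) / M B t ω / 2) ↔ A B t ω < u := by
    rw [← not_le, (expNegInvGlue.nonneg _).ge_iff_eq', expNegInvGlue.zero_iff_nonpos, not_le,
      div_pos_iff_of_pos_right two_pos, div_pos_iff_of_pos_right M_pos, sub_pos]
  have hmoments := integrable_inv_and_mul_integral_inv (P := P)
    (hg.comp (((hA.const_add u).div hM).div_const 2))
    (hg.comp (((hA.const_sub u).div hM).div_const 2)) (fun ω => expNegInvGlue_mem_Icc _)
    (fun ω => expNegInvGlue_mem_Icc _) (expNegInvGlue.pos_of_pos (half_pos hu))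
    (hB.expNegInvGlue_mul_integral_pow ht u)
  simpa only [Function.comp_apply, Pi.div_apply, hW, hV, expNegInvGlue_half hu] using hmoments

theorem IsBrownianMotion.hasDerivAt_exp_mul_integral_exp (hB : IsBrownianMotion P B)
    (ht : 0 ≤ t) (hu : 0 < u) :
    HasDerivAt (fun u => Real.exp (-(2 / u)) * ∫ ω, Real.exp (2 * M B t ω / (u + A B t ω)) ∂P)
      (2 / u ^ 2 * Real.exp (-(2 / u)) * (∫ ω, Real.exp (2 * M B t ω / (u + A B t ω)) ∂P)
        - Real.exp (-(2 / u)) * ∫ ω, 2 * M B t ω / (u + A B t ω) ^ 2 *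
          Real.exp (2 * M B t ω / (u + A B t ω)) ∂P) u := by
  have hexp : HasDerivAt (fun u => Real.exp (-(2 / u))) (Real.exp (-(2 / u)) * (2 / u ^ 2)) u := by
    simpa [div_eq_mul_inv] using ((hasDerivAt_inv hu.ne').const_mul 2).fun_neg.exp
  have hint := hasDerivAt_integral_exp_div_add ((hB.measurable_M t).const_mul 2)
    (hB.measurable_A t) (fun ω => mul_nonneg zero_le_two M_pos.le) (fun ω => A_nonneg ht)
    (half_pos hu) (half_lt_self hu)
    (hB.integrable_exp_and_exp_mul_integral_exp ht (half_pos hu)).1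
  refine (hexp.mul hint).congr_deriv ?_
  ring

theorem IsBrownianMotion.hasDerivAt_integral_max_A_sub (hB : IsBrownianMotion P B)
    (ht : 0 ≤ t) (hu : 0 < u) :
    HasDerivAt (fun u => ∫ ω, max (A B t ω - u) 0 ∂P)
      (Real.exp (-(2 / u)) * (∫ ω, Real.exp (2 * M B t ω / (u + A B t ω)) ∂P) - 1) u := by
  have := hB.isProbabilityMeasure
  have hA := hB.measurable_A t
  have hcont : ContinuousAt (fun u => P.real {ω | A B t ω < u}) u :=
    (hB.hasDerivAt_exp_mul_integral_exp ht hu).continuousAt.congr <| (eventually_gt_nhds hu).mono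
      fun v hv => (hB.integrable_exp_and_exp_mul_integral_exp ht hv).2
  refine (hasDerivAt_integral_max_sub_zero hA (hB.integrable_A ht)
    (measure_eq_zero_of_continuousAt hA hcont)).congr_deriv ?_
  have hcompl : {ω | u ≤ A B t ω} = {ω | A B t ω < u}ᶜ := by
    ext ω
    exact (not_lt (a := A B t ω)).symm
  rw [(hB.integrable_exp_and_exp_mul_integral_exp ht hu).2, hcompl,
    probReal_compl_eq_one_sub (measurableSet_lt hA measurable_const), neg_sub]

end DistributionFunction

theorem second_deriv_expected_max (hB : IsBrownianMotion P B) (t a : ℝ)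
    (ht : 0 < t) (ha : 0 < a) :
    DifferentiableAt ℝ (fun u => ∫ ω, max (A B t ω - u) 0 ∂P) a ∧
    HasDerivAt (deriv (fun u => ∫ ω, max (A B t ω - u) 0 ∂P))
      (2 / a ^ 2 * Real.exp (-2 / a) *
          (∫ ω, Real.exp (2 * Real.exp (B t ω - t / 2) / (a + A B t ω)) ∂P)
        - 1 / 2 * Real.exp (-2 / a) *
          ∫ ω, M B t ω * (a / 2 + A B t ω / 2)⁻¹ ^ 2 *
                Real.exp (M B t ω / (a / 2 + A B t ω / 2)) ∂P) a := by
  refine ⟨(hB.hasDerivAt_integral_max_A_sub ht.le ha).differentiableAt, ?_⟩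
  have hderiv : deriv (fun u => ∫ ω, max (A B t ω - u) 0 ∂P) =ᶠ[nhds a] fun u =>
      Real.exp (-(2 / u)) * (∫ ω, Real.exp (2 * M B t ω / (u + A B t ω)) ∂P) - 1 :=
    (eventually_gt_nhds ha).mono fun u hu => (hB.hasDerivAt_integral_max_A_sub ht.le hu).deriv
  refine (((hB.hasDerivAt_exp_mul_integral_exp ht.le ha).sub_const 1).congr_of_eventuallyEq
    hderiv).congr_deriv ?_
  have hintegrand (ω : Ω) : M B t ω * (a / 2 + A B t ω / 2)⁻¹ ^ 2 *
      Real.exp (M B t ω / (a / 2 + A B t ω / 2)) = 2 * (2 * M B t ω / (a + A B t ω) ^ 2 *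
        Real.exp (2 * M B t ω / (a + A B t ω))) := by
    rw [← add_div, inv_div, div_div_eq_mul_div, mul_comm (M B t ω) 2, div_pow]
    ring
  simp only [hintegrand, integral_const_mul, neg_div]
  unfold M
  ring
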